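/- arXiv:1409.7955 — 3 statements merged into one kernel-verified Lean document; each statement's English description precedes it below -/
import Mathlib

section
/- For every n ∈ ℕ with n ≥ 1, the number of twist-equivalence classes of n-dimensional irreducible complex representations of the integral Heisenberg group H(ℤ) equals Euler's totient function: r̃ₙ(H(ℤ)) = φ(n). Equivalently, ζ^{~irr}_{H(ℤ)}(s) = ζ(s−1)/ζ(s). -/
/-- The Heisenberg group over a commutative ring `R`: the group of upper unitriangular
`3 × 3` matrices `![![1, x, z], ![0, 1, y], ![0, 0, 1]]` with entries in `R`,
encoded by the entry triple `(x, y, z)` with the matrix multiplication law. -/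
@[ext]
structure Heisenberg (R : Type*) [CommRing R] where
  x : R
  y : R
  z : R

namespace Heisenberg

variable {R : Type*} [CommRing R]

instance : Mul (Heisenberg R) :=
  ⟨fun a b => ⟨a.x + b.x, a.y + b.y, a.z + b.z + a.x * b.y⟩⟩

instance : One (Heisenberg R) := ⟨⟨0, 0, 0⟩⟩

instance : Inv (Heisenberg R) :=
  ⟨fun a => ⟨-a.x, -a.y, a.x * a.y - a.z⟩⟩

lemma mul_def (a b : Heisenberg R) :
    a * b = ⟨a.x + b.x, a.y + b.y, a.z + b.z + a.x * b.y⟩ := rfl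

lemma one_def : (1 : Heisenberg R) = ⟨0, 0, 0⟩ := rfl

lemma inv_def (a : Heisenberg R) : a⁻¹ = ⟨-a.x, -a.y, a.x * a.y - a.z⟩ := rfl

instance : Group (Heisenberg R) where
  mul_assoc a b c := by
    simp only [mul_def, mk.injEq]
    refine ⟨by ring, by ring, by ring⟩
  one_mul a := by ext <;> simp [mul_def, one_def]
  mul_one a := by ext <;> simp [mul_def, one_def]
  inv_mul_cancel a := by
    simp only [mul_def, inv_def, one_def, mk.injEq]
    refine ⟨by ring, by ring, by ring⟩

end Heisenberg

open scoped MatrixGroups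

/-- A submodule `W` of `ℂ^n` is invariant under a matrix representation `ρ` if it is stable
under the action of every `ρ g`. -/
def RepInvariant {G : Type*} [Group G] {n : ℕ} (ρ : G →* GL (Fin n) ℂ)
    (W : Submodule ℂ (Fin n → ℂ)) : Prop :=
  ∀ g : G, ∀ v ∈ W, Matrix.mulVec (ρ g : Matrix (Fin n) (Fin n) ℂ) v ∈ W

/-- A matrix representation `ρ : G →* GLₙ(ℂ)` is irreducible if the associated `ℂG`-module
`ℂ^n` is simple, i.e. nonzero and without proper nonzero invariant submodules. -/
def RepIsIrreducible {G : Type*} [Group G] {n : ℕ} (ρ : G →* GL (Fin n) ℂ) : Prop :=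
  (⊥ : Submodule ℂ (Fin n → ℂ)) ≠ ⊤ ∧
    ∀ W : Submodule ℂ (Fin n → ℂ), RepInvariant ρ W → W = ⊥ ∨ W = ⊤

/-- Two matrix representations are isomorphic if they are conjugate by an element of
`GLₙ(ℂ)`. -/
def RepIso {G : Type*} [Group G] {n : ℕ} (ρ₁ ρ₂ : G →* GL (Fin n) ℂ) : Prop :=
  ∃ T : GL (Fin n) ℂ, ∀ g : G, T * ρ₁ g * T⁻¹ = ρ₂ g

/-- Two matrix representations are twist-equivalent if there is a one-dimensional character
`χ : G →* ℂˣ` such that `ρ₁` is isomorphic to `g ↦ χ(g) ρ₂(g)`. -/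
def TwistEquiv {G : Type*} [Group G] {n : ℕ} (ρ₁ ρ₂ : G →* GL (Fin n) ℂ) : Prop :=
  ∃ χ : G →* ℂˣ, ∃ T : GL (Fin n) ℂ, ∀ g : G,
    (ρ₁ g : Matrix (Fin n) (Fin n) ℂ)
      = (χ g : ℂ) • ((T * ρ₂ g * T⁻¹ : GL (Fin n) ℂ) : Matrix (Fin n) (Fin n) ℂ)

/-- `r̃ₙ(G)`: the number of twist-equivalence classes of `n`-dimensional irreducible complex
representations of `G`. -/
noncomputable def twistRepCount (G : Type*) [Group G] (n : ℕ) : ℕ :=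
  Nat.card (Quot fun ρ₁ ρ₂ : {ρ : G →* GL (Fin n) ℂ // RepIsIrreducible ρ} =>
    TwistEquiv ρ₁.1 ρ₂.1)


section HeisenbergProof

open Matrix

/-- A bi-infinite geometric sequence in a module. -/
lemma hz_geom {V : Type*} [AddCommGroup V] [Module ℂ V] (f : ℤ → V) (α : ℂ) (hα : α ≠ 0)
    (h : ∀ k, f (k + 1) = α • f k) (k : ℤ) : f k = α ^ k • f 0 := by
  induction k using Int.induction_on with
  | zero => simp
  | succ i ih => rw [h, ih, smul_smul, zpow_add_one₀ hα, mul_comm]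
  | pred i ih =>
    have h1 := h (-(i : ℤ) - 1)
    rw [sub_add_cancel, ih] at h1
    rw [zpow_sub_one₀ hα, mul_comm, mul_smul, h1, smul_smul, inv_mul_cancel₀ hα, one_smul]

/-- An eigenvector inside a nonzero invariant subspace. -/
lemma hz_exists_eigen {n : ℕ} (M : Matrix (Fin n) (Fin n) ℂ) (W : Submodule ℂ (Fin n → ℂ))
    (hW : W ≠ ⊥) (hM : ∀ v ∈ W, M *ᵥ v ∈ W) :
    ∃ (α : ℂ) (v : Fin n → ℂ), v ∈ W ∧ v ≠ 0 ∧ M *ᵥ v = α • v := by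
  have : Nontrivial W := (Submodule.nontrivial_iff_ne_bot).2 hW
  obtain ⟨α, hα⟩ := Module.End.exists_eigenvalue (M.mulVecLin.restrict (p := W) (q := W) hM)
  obtain ⟨v, hv⟩ := hα.exists_hasEigenvector
  refine ⟨α, v, v.2, fun h => hv.2 (Subtype.ext h), ?_⟩
  have := congrArg Subtype.val hv.apply_eq_smul
  exact this

/-- Schur's lemma. -/
lemma hz_schur {G : Type*} [Group G] {n : ℕ} (ρ : G →* GL (Fin n) ℂ) (hρ : RepIsIrreducible ρ)
    (M : Matrix (Fin n) (Fin n) ℂ) (hM : ∀ g, M * (ρ g).val = (ρ g).val * M) :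
    ∃ c : ℂ, ∀ v, M *ᵥ v = c • v := by
  obtain ⟨α, v, -, hv, hMv⟩ := hz_exists_eigen M ⊤ (Ne.symm hρ.1) (fun _ _ => trivial)
  refine ⟨α, ?_⟩
  let W : Submodule ℂ (Fin n → ℂ) := Module.End.eigenspace M.mulVecLin α
  have hmem : ∀ w, w ∈ W ↔ M *ᵥ w = α • w := fun w => by
    simp [W]
  have hinv : RepInvariant ρ W := by
    intro g w hw
    rw [hmem] at hw ⊢
    rw [mulVec_mulVec, hM, ← mulVec_mulVec, hw, mulVec_smul]
  rcases hρ.2 W hinv with h | h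
  · exact absurd ((Submodule.mem_bot ℂ).1 (h ▸ (hmem v).2 hMv)) hv
  · intro w
    rw [← hmem, h]; trivial

variable {n : ℕ} (ρ : Heisenberg ℤ →* GL (Fin n) ℂ)

lemma hz_mul (g h : Heisenberg ℤ) (v : Fin n → ℂ) :
    (ρ (g * h)).val *ᵥ v = (ρ g).val *ᵥ ((ρ h).val *ᵥ v) := by
  simp [mulVec_mulVec]

lemma hz_one (v : Fin n → ℂ) : (ρ ⟨0, 0, 0⟩).val *ᵥ v = v := by
  rw [← Heisenberg.one_def]; simp

lemma hz_inj (g : Heisenberg ℤ) (v : Fin n → ℂ) (h : (ρ g).val *ᵥ v = 0) : v = 0 := by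
  have h1 := hz_mul ρ g⁻¹ g v
  rw [h] at h1
  simpa using h1

variable {ρ}

lemma hz_eigen_ne {v : Fin n → ℂ} (hv : v ≠ 0) {α : ℂ} {g : Heisenberg ℤ}
    (h : (ρ g).val *ᵥ v = α • v) : α ≠ 0 := by
  rintro rfl
  exact hv (hz_inj ρ g v (by simpa using h))

/-- Action of `⟨x, 0, z⟩` on an eigenvector. -/
lemma hz_torus {v : Fin n → ℂ} {α l : ℂ} (hα : α ≠ 0) (hl : l ≠ 0)
    (hX : (ρ ⟨1, 0, 0⟩).val *ᵥ v = α • v) (hZ : (ρ ⟨0, 0, 1⟩).val *ᵥ v = l • v) (x z : ℤ) :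
    (ρ ⟨x, 0, z⟩).val *ᵥ v = (α ^ x * l ^ z) • v := by
  have h1 := hz_geom (fun k : ℤ => (ρ ⟨k, 0, 0⟩).val *ᵥ v) α hα (fun k => by
    have : (⟨k + 1, 0, 0⟩ : Heisenberg ℤ) = ⟨k, 0, 0⟩ * ⟨1, 0, 0⟩ := by
      simp [Heisenberg.mul_def]
    simp only [this]
    rw [hz_mul, hX, mulVec_smul]) x
  have h2 := hz_geom (fun k : ℤ => (ρ ⟨0, 0, k⟩).val *ᵥ v) l hl (fun k => by
    have : (⟨0, 0, k + 1⟩ : Heisenberg ℤ) = ⟨0, 0, k⟩ * ⟨0, 0, 1⟩ := by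
      simp [Heisenberg.mul_def]
    simp only [this]
    rw [hz_mul, hZ, mulVec_smul]) z
  simp only [hz_one] at h1 h2
  have : (⟨x, 0, z⟩ : Heisenberg ℤ) = ⟨x, 0, 0⟩ * ⟨0, 0, z⟩ := by
    simp [Heisenberg.mul_def]
  rw [this, hz_mul, h2, mulVec_smul, h1, smul_smul, mul_comm]

/-- Action of any element on the orbit `ρ(Y^k) v`. -/
lemma hz_orbit {v : Fin n → ℂ} {α l : ℂ} (hα : α ≠ 0) (hl : l ≠ 0)
    (hX : (ρ ⟨1, 0, 0⟩).val *ᵥ v = α • v) (hZ : (ρ ⟨0, 0, 1⟩).val *ᵥ v = l • v)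
    (g : Heisenberg ℤ) (k : ℤ) :
    (ρ g).val *ᵥ ((ρ ⟨0, k, 0⟩).val *ᵥ v)
      = (α ^ g.x * l ^ (g.z + g.x * k)) • ((ρ ⟨0, k + g.y, 0⟩).val *ᵥ v) := by
  have : g * ⟨0, k, 0⟩ = ⟨0, k + g.y, 0⟩ * ⟨g.x, 0, g.z + g.x * k⟩ := by
    simp [Heisenberg.mul_def, add_comm]
  rw [← hz_mul, this, hz_mul, hz_torus hα hl hX hZ, mulVec_smul]

lemma hz_indep {v : Fin n → ℂ} (hv : v ≠ 0) {α l : ℂ} (hα : α ≠ 0) (hl : l ≠ 0)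
    (hX : (ρ ⟨1, 0, 0⟩).val *ᵥ v = α • v) (hZ : (ρ ⟨0, 0, 1⟩).val *ᵥ v = l • v)
    {m : ℕ} (hm : IsPrimitiveRoot l m) :
    LinearIndependent ℂ (fun i : Fin m => (ρ ⟨0, (i : ℤ), 0⟩).val *ᵥ v) := by
  refine Module.End.eigenvectors_linearIndependent' (ρ ⟨1, 0, 0⟩).val.mulVecLin
    (fun i : Fin m => α * l ^ (i : ℕ)) ?_ _ ?_
  · intro i j hij
    exact Fin.ext (hm.pow_inj i.2 j.2 (mul_left_cancel₀ hα hij))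
  · intro i
    refine ⟨?_, fun h => hv (hz_inj ρ _ v h)⟩
    rw [Module.End.mem_eigenspace_iff, mulVecLin_apply, hz_orbit hα hl hX hZ]
    simp

/-- If the centre acts by a primitive `n`-th root of unity, the representation is irreducible. -/
lemma hz_irred (hn : 1 ≤ n) {l : ℂ} (hl : IsPrimitiveRoot l n)
    (hZ : ∀ v, (ρ ⟨0, 0, 1⟩).val *ᵥ v = l • v) : RepIsIrreducible ρ := by
  have : NeZero n := ⟨by omega⟩
  refine ⟨bot_ne_top, fun W hW => ?_⟩
  by_cases hb : W = ⊥
  · exact Or.inl hb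
  right
  obtain ⟨α, v, hvW, hv, hX⟩ := hz_exists_eigen _ W hb (hW ⟨1, 0, 0⟩)
  have hi := hz_indep hv (hz_eigen_ne hv hX) (hl.ne_zero (by omega)) hX (hZ v) hl
  have ht := hi.span_eq_top_of_card_eq_finrank' (by simp)
  rw [eq_top_iff, ← ht, Submodule.span_le]
  rintro _ ⟨i, rfl⟩
  exact hW _ _ hvW

/-- The main structure: for irreducible `ρ`, basis adapted to the Heisenberg action. -/
lemma hz_structure (hn : 1 ≤ n) (hρ : RepIsIrreducible ρ) :
    ∃ l : ℂ, IsPrimitiveRoot l n ∧ ∃ (α b : ℂ) (u : ℤ → Fin n → ℂ), α ≠ 0 ∧ b ≠ 0 ∧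
      Function.Periodic u (n : ℤ) ∧ LinearIndependent ℂ (fun i : Fin n => u i) ∧
      ∀ (g : Heisenberg ℤ) (k : ℤ), (ρ g).val *ᵥ u k
        = (α ^ g.x * b ^ g.y) • (l ^ (g.z + g.x * k) • u (k + g.y)) := by
  have : NeZero n := ⟨by omega⟩
  obtain ⟨l, hZ⟩ := hz_schur ρ hρ (ρ ⟨0, 0, 1⟩).val (fun g => by
    rw [← Units.val_mul, ← Units.val_mul, ← map_mul, ← map_mul]
    congr 2
    simp [Heisenberg.mul_def, add_comm])
  obtain ⟨α, v, -, hv, hX⟩ := hz_exists_eigen (ρ ⟨1, 0, 0⟩).val ⊤ (Ne.symm hρ.1)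
    (fun _ _ => trivial)
  have hα := hz_eigen_ne hv hX
  have hl0 := hz_eigen_ne hv (hZ v)
  have hln : l ^ n = 1 := by
    have hZ' : (ρ ⟨0, 0, 1⟩).val = l • (1 : Matrix (Fin n) (Fin n) ℂ) := by
      apply Matrix.ext_of_mulVec_single
      intro i
      rw [hZ, smul_mulVec, one_mulVec]
    have h1 : (⟨1, 0, 0⟩ * ⟨0, 1, 0⟩ : Heisenberg ℤ) = ⟨0, 0, 1⟩ * (⟨0, 1, 0⟩ * ⟨1, 0, 0⟩) := by
      simp [Heisenberg.mul_def]
    have h2 := congrArg (fun g => (ρ g).val.det) h1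
    simp only [map_mul, Units.val_mul, det_mul, hZ'] at h2
    rw [det_smul, det_one, Fintype.card_fin, mul_one, mul_comm (ρ ⟨0, 1, 0⟩).val.det] at h2
    have hd : ∀ g, (ρ g).val.det ≠ 0 := fun g =>
      ((Matrix.isUnit_iff_isUnit_det _).1 (ρ g).isUnit).ne_zero
    have h3 := mul_ne_zero (hd ⟨1, 0, 0⟩) (hd ⟨0, 1, 0⟩)
    exact (mul_right_cancel₀ h3 (by rw [one_mul]; exact h2)).symm
  obtain ⟨m, hm, hm0⟩ : ∃ m, IsPrimitiveRoot l m ∧ 0 < m :=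
    ⟨_, IsPrimitiveRoot.orderOf l, orderOf_pos_iff.2 (isOfFinOrder_iff_pow_eq_one.2 ⟨n, hn, hln⟩)⟩
  have hind := hz_indep hv hα hl0 hX (hZ v) hm
  obtain ⟨β, hβ⟩ := hz_schur ρ hρ (ρ ⟨0, m, 0⟩).val (fun g => by
    apply Matrix.ext_of_mulVec_single
    intro i
    generalize (Pi.single i 1 : Fin n → ℂ) = w
    rw [← mulVec_mulVec, ← mulVec_mulVec, ← hz_mul, ← hz_mul]
    have e : g * ⟨0, m, 0⟩ = (⟨0, m, 0⟩ * g) * ⟨0, 0, m * g.x⟩ := by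
      simp [Heisenberg.mul_def, add_comm, mul_comm]
    have hZm := hz_geom (fun k : ℤ => (ρ ⟨0, 0, k⟩).val *ᵥ w) l hl0 (fun k => by
      have : (⟨0, 0, k + 1⟩ : Heisenberg ℤ) = ⟨0, 0, k⟩ * ⟨0, 0, 1⟩ := by
        simp [Heisenberg.mul_def]
      simp only [this]
      rw [hz_mul, hZ, mulVec_smul]) (m * g.x)
    simp only [hz_one] at hZm
    rw [e, hz_mul _ _ ⟨0, 0, m * g.x⟩, hZm, _root_.zpow_mul, zpow_natCast, hm.pow_eq_one, _root_.one_zpow,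
      one_smul])
  have hβ0 : β ≠ 0 := hz_eigen_ne hv (hβ v)
  obtain ⟨b, hb⟩ := IsAlgClosed.exists_pow_nat_eq β hm0
  have hb0 : b ≠ 0 := by
    rintro rfl
    exact hβ0 (by rw [← hb, zero_pow hm0.ne'])
  let u : ℤ → Fin n → ℂ := fun k => b ^ (-k) • ((ρ ⟨0, k, 0⟩).val *ᵥ v)
  have hper : Function.Periodic u (m : ℤ) := by
    intro k
    have : (⟨0, k + m, 0⟩ : Heisenberg ℤ) = ⟨0, m, 0⟩ * ⟨0, k, 0⟩ := by
      simp [Heisenberg.mul_def, add_comm]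
    simp only [u]
    rw [this, hz_mul, hβ, smul_smul, ← hb, ← zpow_natCast, ← zpow_add₀ hb0]
    congr 2
    ring
  have hact : ∀ (g : Heisenberg ℤ) (k : ℤ), (ρ g).val *ᵥ u k
        = (α ^ g.x * b ^ g.y) • (l ^ (g.z + g.x * k) • u (k + g.y)) := by
    intro g k
    simp only [u]
    rw [mulVec_smul, hz_orbit hα hl0 hX (hZ v), smul_smul, smul_smul, smul_smul]
    congr 1
    have : b ^ (-k) = b ^ g.y * b ^ (-(k + g.y)) := by
      rw [← zpow_add₀ hb0]; congr 1; ring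
    rw [this]; ring
  have hindu : LinearIndependent ℂ (fun i : Fin m => u i) := by
    have := hind.units_smul (fun i : Fin m => Units.mk0 (b ^ (-(i : ℤ))) (zpow_ne_zero _ hb0))
    exact this
  have hmn : m = n := by
    apply le_antisymm
    · simpa using hind.fintype_card_le_finrank
    · have hWinv : RepInvariant ρ (Submodule.span ℂ (Set.range u)) := by
        intro g w hw
        have : Submodule.span ℂ (Set.range u) ≤
            (Submodule.span ℂ (Set.range u)).comap (ρ g).val.mulVecLin := by
          rw [Submodule.span_le]
          rintro _ ⟨k, rfl⟩
          simp only [Submodule.comap_coe, Set.mem_preimage, mulVecLin_apply, SetLike.mem_coe]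
          rw [hact]
          exact Submodule.smul_mem _ _ (Submodule.smul_mem _ _
            (Submodule.subset_span ⟨_, rfl⟩))
        exact this hw
      have htop : Submodule.span ℂ (Set.range u) = ⊤ := by
        refine (hρ.2 _ hWinv).resolve_left (fun h => hv ?_)
        have h0 : u 0 ∈ Submodule.span ℂ (Set.range u) := Submodule.subset_span ⟨_, rfl⟩
        rw [h, Submodule.mem_bot] at h0
        simpa [u, hz_one] using h0
      have hr : Set.range u = Set.range (fun i : Fin m => u i) := by
        apply Set.Subset.antisymm
        · rintro _ ⟨k, rfl⟩
          have hm' : (m : ℤ) ≠ 0 := by exact_mod_cast hm0.ne'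
          have h1 := Int.emod_nonneg k hm'
          have h2 := Int.emod_lt_of_pos k (show (0 : ℤ) < m by exact_mod_cast hm0)
          refine ⟨⟨(k % m).toNat, by omega⟩, ?_⟩
          simp only [Int.toNat_of_nonneg h1]
          rw [Int.emod_def, mul_comm]
          exact hper.sub_int_mul_eq _
        · rintro _ ⟨i, rfl⟩
          exact ⟨_, rfl⟩
      have := finrank_range_le_card (R := ℂ) (fun i : Fin m => u i)
      rw [Set.finrank, ← hr, htop] at this
      simpa using this
  subst hmn
  exact ⟨l, hm, α, b, u, hα, hb0, hper, hindu, hact⟩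

/-- Reduction modulo `n`, valued in `Fin n`. -/
def hzIdx (n : ℕ) [NeZero n] (t : ℤ) : Fin n :=
  ⟨(t % n).toNat, by
    have h0 : (0 : ℤ) < n := by exact_mod_cast Nat.pos_of_neZero n
    have h1 := Int.emod_nonneg t h0.ne'
    have h2 := Int.emod_lt_of_pos t h0
    omega⟩

lemma hzIdx_val [NeZero n] (t : ℤ) : ((hzIdx n t : Fin n) : ℤ) = t % n := by
  have h0 : (0 : ℤ) < n := by exact_mod_cast Nat.pos_of_neZero n
  exact Int.toNat_of_nonneg (Int.emod_nonneg t h0.ne')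

lemma hzIdx_coe [NeZero n] (i : Fin n) : hzIdx n (i : ℤ) = i := by
  apply Fin.ext
  have := hzIdx_val (n := n) (i : ℤ)
  rw [Int.emod_eq_of_lt (by omega) (by exact_mod_cast i.2)] at this
  exact_mod_cast this

lemma hzIdx_add [NeZero n] (s t : ℤ) : hzIdx n ((hzIdx n s : Fin n) + t) = hzIdx n (s + t) := by
  apply Fin.ext
  have h : (((hzIdx n ((hzIdx n s : Fin n) + t) : Fin n) : ℕ) : ℤ)
      = ((hzIdx n (s + t) : Fin n) : ℕ) := by
    rw [hzIdx_val, hzIdx_val, hzIdx_val, Int.emod_add_emod]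
  exact_mod_cast h

lemma hz_periodic [NeZero n] {V : Type*} {u : ℤ → V} (h : Function.Periodic u (n : ℤ)) (t : ℤ) :
    u (hzIdx n t : Fin n) = u t := by
  rw [hzIdx_val, Int.emod_def, mul_comm]
  exact h.sub_int_mul_eq _

lemma hz_pow_periodic {l : ℂ} (hl : l ^ n = 1) (h0 : l ≠ 0) (x : ℤ) :
    Function.Periodic (fun k : ℤ => l ^ (x * k)) (n : ℤ) := by
  intro k
  simp only
  rw [mul_add, zpow_add₀ h0, mul_comm x (n : ℤ), _root_.zpow_mul l (n : ℤ), zpow_natCast, hl, _root_.one_zpow,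
    mul_one]

/-- Matrices of the standard representation. -/
noncomputable def hzMat [NeZero n] (l : ℂ) (g : Heisenberg ℤ) : Matrix (Fin n) (Fin n) ℂ :=
  fun i j => if i = hzIdx n (j + g.y) then l ^ (g.z + g.x * j) else 0

/-- The standard representation. -/
noncomputable def hzStd [NeZero n] (l : ℂ) (hl : l ^ n = 1) (h0 : l ≠ 0) :
    Heisenberg ℤ →* GL (Fin n) ℂ :=
  MonoidHom.toHomUnits
    { toFun := hzMat l
      map_one' := by
        ext i j
        simp [hzMat, Heisenberg.one_def, hzIdx_coe, Matrix.one_apply]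
      map_mul' := fun a b => by
        ext i j
        simp only [hzMat, Matrix.mul_apply, mul_ite, mul_zero, Finset.sum_ite_eq',
          Finset.mem_univ, if_true, hzIdx_add, Heisenberg.mul_def]
        rw [show (j : ℤ) + (a.y + b.y) = j + b.y + a.y by ring, ite_mul, zero_mul]
        congr 1
        have := hz_periodic (n := n) (hz_pow_periodic hl h0 a.x) (j + b.y)
        rw [zpow_add₀ h0 a.z, this, ← zpow_add₀ h0, ← zpow_add₀ h0]
        congr 1
        ring }

lemma hzStd_val [NeZero n] (l : ℂ) (hl : l ^ n = 1) (h0 : l ≠ 0) (g : Heisenberg ℤ) :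
    (hzStd l hl h0 g : GL (Fin n) ℂ).val = hzMat l g := rfl

lemma hzMat_Z [NeZero n] (l : ℂ) :
    hzMat (n := n) l ⟨0, 0, 1⟩ = l • (1 : Matrix (Fin n) (Fin n) ℂ) := by
  ext i j
  simp [hzMat, hzIdx_coe, Matrix.one_apply]

/-- Characters of the Heisenberg group. -/
noncomputable def hzChar (α b : ℂˣ) : Heisenberg ℤ →* ℂˣ where
  toFun g := α ^ g.x * b ^ g.y
  map_one' := by simp [Heisenberg.one_def]
  map_mul' g h := by
    simp only [Heisenberg.mul_def, _root_.zpow_add]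
    exact mul_mul_mul_comm _ _ _ _

lemma hz_twist [NeZero n] (hρ : RepIsIrreducible ρ) :
    ∃ (l : ℂ) (hl : IsPrimitiveRoot l n),
      TwistEquiv ρ (hzStd l hl.pow_eq_one (hl.ne_zero (NeZero.ne n))) := by
  obtain ⟨l, hl, α, b, u, hα, hb, hper, hind, hact⟩ :=
    hz_structure (Nat.pos_of_neZero n) hρ
  refine ⟨l, hl, hzChar (Units.mk0 α hα) (Units.mk0 b hb), ?_⟩
  let M : Matrix (Fin n) (Fin n) ℂ := Matrix.of fun i j => u j i
  have hM : IsUnit M := Matrix.linearIndependent_cols_iff_isUnit.1 hind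
  obtain ⟨T, hT⟩ := hM
  refine ⟨T, fun g => ?_⟩
  have key : (ρ g).val * T.val = (α ^ g.x * b ^ g.y) • (T.val * hzMat l g) := by
    ext i j
    have h1 := congrFun (hact g j) i
    rw [hT]
    have h2 : ((ρ g).val * M) i j = ((ρ g).val *ᵥ u j) i := rfl
    rw [h2, h1]
    simp [Matrix.mul_apply, hzMat, M, hz_periodic hper]
    exact Or.inl (mul_comm _ _)
  rw [Units.val_mul, Units.val_mul, hzStd_val, ← smul_mul_assoc]
  have hc : ((hzChar (Units.mk0 α hα) (Units.mk0 b hb) g : ℂˣ) : ℂ) = α ^ g.x * b ^ g.y := by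
    simp [hzChar]
  rw [hc, ← key, mul_assoc, Units.mul_inv, mul_one]

lemma hz_trace {ρ₁ ρ₂ : Heisenberg ℤ →* GL (Fin n) ℂ} (h : TwistEquiv ρ₁ ρ₂) :
    (ρ₁ ⟨0, 0, 1⟩).val.trace = (ρ₂ ⟨0, 0, 1⟩).val.trace := by
  obtain ⟨χ, T, h⟩ := h
  have hχ : χ ⟨0, 0, 1⟩ = 1 := by
    have h1 : (⟨1, 0, 0⟩ * ⟨0, 1, 0⟩ : Heisenberg ℤ) = ⟨0, 0, 1⟩ * (⟨0, 1, 0⟩ * ⟨1, 0, 0⟩) := by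
      simp [Heisenberg.mul_def]
    have h2 := congrArg χ h1
    simp only [map_mul] at h2
    rw [mul_comm (χ ⟨0, 1, 0⟩)] at h2
    exact right_eq_mul.1 h2
  rw [h, hχ, Units.val_one, one_smul, Units.val_mul, Units.val_mul, Matrix.trace_mul_comm,
    ← mul_assoc, Units.inv_mul, one_mul]

end HeisenbergProof

/-- **The twist-representation zeta function of the integral Heisenberg group**
(Nunley–Magid): for `n ≥ 1`, the number of twist-isoclasses of `n`-dimensional irreducible
complex representations of `H(ℤ)` is `φ(n)`; equivalently
`ζ^{~irr}_{H(ℤ)}(s) = ζ(s-1)/ζ(s)`. -/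
theorem twist_representation_count_heisenberg (n : ℕ) (hn : 1 ≤ n) :
    twistRepCount (Heisenberg ℤ) n = Nat.totient n := by
  have : NeZero n := ⟨by omega⟩
  have hp : ∀ l : primitiveRoots n ℂ, IsPrimitiveRoot (l : ℂ) n := fun l =>
    (mem_primitiveRoots hn).1 l.2
  let S : primitiveRoots n ℂ → {ρ : Heisenberg ℤ →* GL (Fin n) ℂ // RepIsIrreducible ρ} :=
    fun l => ⟨hzStd l (hp l).pow_eq_one ((hp l).ne_zero (NeZero.ne n)),
      hz_irred hn (hp l) (fun v => by
        rw [hzStd_val, hzMat_Z, Matrix.smul_mulVec, Matrix.one_mulVec])⟩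
  let F : primitiveRoots n ℂ → Quot (fun ρ₁ ρ₂ :
      {ρ : Heisenberg ℤ →* GL (Fin n) ℂ // RepIsIrreducible ρ} => TwistEquiv ρ₁.1 ρ₂.1) :=
    fun l => Quot.mk _ (S l)
  have hF : Function.Bijective F := by
    constructor
    · intro l l' h
      have h1 := congrArg (Quot.lift (fun ρ => (ρ.1 ⟨0, 0, 1⟩).val.trace)
        (fun _ _ h => hz_trace h)) h
      have h2 : (hzMat (n := n) (l : ℂ) ⟨0, 0, 1⟩).trace
        = (hzMat (n := n) (l' : ℂ) ⟨0, 0, 1⟩).trace := h1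
      rw [hzMat_Z, hzMat_Z, Matrix.trace_smul, Matrix.trace_smul, Matrix.trace_one] at h2
      have h3 : ((Fintype.card (Fin n) : ℕ) : ℂ) ≠ 0 := by
        simpa using NeZero.ne n
      exact Subtype.ext (mul_right_cancel₀ h3 h2)
    · intro q
      induction q using Quot.ind with
      | mk ρ =>
        obtain ⟨l, hl, h⟩ := hz_twist ρ.2
        exact ⟨⟨l, (mem_primitiveRoots hn).2 hl⟩,
          (Quot.sound (r := fun ρ₁ ρ₂ : {ρ : Heisenberg ℤ →* GL (Fin n) ℂ // RepIsIrreducible ρ} =>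
            TwistEquiv ρ₁.1 ρ₂.1) (a := ρ) (b := S ⟨l, (mem_primitiveRoots hn).2 hl⟩) h).symm⟩
  rw [twistRepCount, ← Nat.card_congr (Equiv.ofBijective F hF), Nat.card_eq_fintype_card,
    Fintype.card_coe, Complex.card_primitiveRoots]
end

section
/- Let K be a number field with ring of integers 𝓞, and let H(𝓞) be the Heisenberg group over 𝓞. Then for every n ∈ ℕ with n ≥ 1, the number of twist-equivalence classes of n-dimensional irreducible complex representations of H(𝓞) equals the sum, over all nonzero ideals I of 𝓞 of absolute norm n, of the cardinality of the unit group of 𝓞/I: r̃ₙ(H(𝓞)) = ∑_{I ⊴ 𝓞, |𝓞/I| = n} |(𝓞/I)ˣ|. Equivalently, ζ^{~irr}_{H(𝓞)}(s) = ζ_K(s−1)/ζ_K(s), where ζ_K is the Dedekind zeta function of K. -/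
open scoped MatrixGroups

theorem addChar_descend {R : Type*} [CommRing R] (I : Ideal R) (ψ : AddChar R ℂ)
    (h : ∀ x ∈ I, ψ x = 1) : ∃ φ : AddChar (R ⧸ I) ℂ, ∀ x, φ (Ideal.Quotient.mk I x) = ψ x := by
  have hwd : ∀ a b : R, Ideal.Quotient.mk I a = Ideal.Quotient.mk I b → ψ a = ψ b := by
    intro a b hab
    have h1 : ψ (a - b) = 1 := h _ (Ideal.Quotient.eq.mp hab)
    have h2 : a = (a - b) + b := by ring
    rw [h2, AddChar.map_add_eq_mul, h1, one_mul]
  have hs := Ideal.Quotient.mk_surjective (I := I)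
  have key : ∀ x, ψ (Function.surjInv hs (Ideal.Quotient.mk I x)) = ψ x := fun x =>
    hwd _ _ (Function.surjInv_eq hs _)
  refine ⟨⟨fun s => ψ (Function.surjInv hs s), ?_, ?_⟩, key⟩
  · have := key 0
    rw [map_zero] at this
    rw [this, AddChar.map_zero_eq_one]
  · intro s t
    obtain ⟨a, rfl⟩ := hs s
    obtain ⟨b, rfl⟩ := hs t
    rw [← map_add, key, key, key, AddChar.map_add_eq_mul]

theorem exists_char_radical {R : Type*} [CommRing R] [IsDedekindDomain R]
    (hfin : ∀ I : Ideal R, I ≠ ⊥ → Finite (R ⧸ I)) (I : Ideal R) (hI : I ≠ ⊥) :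
    ∃ ψ : AddChar R ℂ, ∀ x, (∀ y, ψ (x * y) = 1) ↔ x ∈ I := by
  classical
  revert hI
  refine UniqueFactorizationMonoid.induction_on_coprime
    (P := fun I : Ideal R => I ≠ ⊥ → ∃ ψ : AddChar R ℂ, ∀ x, (∀ y, ψ (x * y) = 1) ↔ x ∈ I) I
    ?_ ?_ ?_ ?_
  · intro h; exact absurd rfl h
  · intro J hJ _
    have : J = ⊤ := Ideal.isUnit_iff.mp hJ
    subst this
    exact ⟨1, by simp⟩
  · intro P e hP hne
    rcases Nat.eq_zero_or_pos e with rfl | he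
    · exact ⟨1, by simp⟩
    obtain ⟨k, rfl⟩ := Nat.exists_eq_add_of_le' he
    have hPp := Ideal.isPrime_of_prime hP
    obtain ⟨a, ha, ha'⟩ := Ideal.exists_mem_pow_notMem_pow_succ P hP.ne_zero hPp.ne_top k
    have := hfin _ hne
    obtain ⟨φ, hφ⟩ := (AddChar.exists_apply_ne_zero (a := Ideal.Quotient.mk (P ^ (k+1)) a)).mpr
      (by rwa [Ne, Ideal.Quotient.eq_zero_iff_mem])
    refine ⟨φ.compAddMonoidHom (Ideal.Quotient.mk (P ^ (k+1))).toAddMonoidHom, fun x => ⟨?_, ?_⟩⟩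
    · intro hx
      by_contra hxn
      have hd : Ideal.span {x} ⊔ P ^ (k+1) ∣ P ^ (k+1) := Ideal.dvd_iff_le.mpr le_sup_right
      obtain ⟨j, hj, hass⟩ := (dvd_prime_pow hP _).mp hd
      rw [associated_iff_eq] at hass
      have hjk : j ≤ k := by
        by_contra hlt
        have : j = k + 1 := by omega
        subst this
        apply hxn
        rw [← hass]
        exact Ideal.mem_sup_left (Ideal.mem_span_singleton_self x)
      have ham : a ∈ Ideal.span {x} ⊔ P ^ (k+1) := by
        rw [hass]; exact Ideal.pow_le_pow_right hjk ha
      obtain ⟨b, hb, c, hc, rfl⟩ := Submodule.mem_sup.mp ham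
      obtain ⟨y, rfl⟩ := Ideal.mem_span_singleton'.mp hb
      apply hφ
      rw [map_add, Ideal.Quotient.eq_zero_iff_mem.mpr hc, add_zero, mul_comm]
      exact hx y
    · intro hx y
      change φ (Ideal.Quotient.mk (P ^ (k+1)) (x * y)) = 1
      rw [Ideal.Quotient.eq_zero_iff_mem.mpr (Ideal.mul_mem_right _ _ hx), AddChar.map_zero_eq_one]
  · intro I J hcop h1 h2 hne
    have hI0 : I ≠ ⊥ := by rintro rfl; simp at hne
    have hJ0 : J ≠ ⊥ := by rintro rfl; simp at hne
    obtain ⟨ψ, hψ⟩ := h1 hI0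
    obtain ⟨φ, hφ⟩ := h2 hJ0
    have hc : IsCoprime I J := by
      rw [Ideal.isCoprime_iff_sup_eq]
      exact Ideal.isUnit_iff.mp (hcop (Ideal.dvd_iff_le.mpr le_sup_left) (Ideal.dvd_iff_le.mpr le_sup_right))
    have hij := (Ideal.isCoprime_iff_exists.mp hc)
    obtain ⟨i, hi, j, hj, hij⟩ := hij
    refine ⟨ψ * φ, fun x => ⟨fun hx => ?_, fun hx y => ?_⟩⟩
    · rw [Ideal.mul_eq_inf_of_isCoprime hc]
      constructor
      · refine (hψ x).mp fun y => ?_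
        have e1 := hx (j * y)
        have e2 := (hφ j).mpr hj (x * y)
        have e3 := (hψ i).mpr hi (x * y)
        have : x * y = x * (j * y) + i * (x * y) := by linear_combination (-(x*y)) * hij
        rw [this, AddChar.map_add_eq_mul, e3, mul_one]
        rw [AddChar.mul_apply, show φ (x * (j * y)) = 1 by rw [← e2]; congr 1; ring, mul_one] at e1
        exact e1
      · refine (hφ x).mp fun y => ?_
        have e1 := hx (i * y)
        have e2 := (hφ j).mpr hj (x * y)
        have e3 := (hψ i).mpr hi (x * y)
        have : x * y = x * (i * y) + j * (x * y) := by linear_combination (-(x*y)) * hij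
        rw [this, AddChar.map_add_eq_mul, e2, mul_one]
        rw [AddChar.mul_apply, show ψ (x * (i * y)) = 1 by rw [← e3]; congr 1; ring, one_mul] at e1
        exact e1
    · rw [AddChar.mul_apply, (hψ x).mpr (Ideal.mul_le_inf hx).1, (hφ x).mpr (Ideal.mul_le_inf hx).2, one_mul]

theorem card_primitive {S : Type*} [CommRing S] [Finite S] (ψ : AddChar S ℂ) (hψ : ψ.IsPrimitive) :
    Nat.card {φ : AddChar S ℂ // φ.IsPrimitive} = Nat.card Sˣ := by
  classical
  have := Fintype.ofFinite S
  have hinj := AddChar.to_mulShift_inj_of_isPrimitive hψ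
  have hbij : Function.Bijective (ψ.mulShift) :=
    (Fintype.bijective_iff_injective_and_card _).mpr ⟨hinj, by rw [AddChar.card_eq]⟩
  symm
  refine Nat.card_congr (Equiv.ofBijective (fun u : Sˣ => ⟨ψ.mulShift u, ?_⟩) ⟨?_, ?_⟩)
  · intro a ha h
    rw [AddChar.mulShift_mulShift] at h
    exact hψ (a := u * a) (by simpa using ha) (by simpa [mul_comm] using h)
  · intro u v h
    exact Units.ext (hinj (Subtype.ext_iff.mp h))
  · rintro ⟨φ, hφ⟩
    obtain ⟨a, rfl⟩ := hbij.2 φ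
    have ha : IsUnit a := by
      by_contra hu
      have : ¬ Function.Injective (fun b => a * b) := by
        intro hi
        obtain ⟨b, hb⟩ := (Finite.injective_iff_surjective.mp hi) 1
        exact hu (IsUnit.of_mul_eq_one b hb)
      apply this
      refine (injective_iff_map_eq_zero (AddMonoidHom.mulLeft a)).mpr ?_
      intro b hb
      by_contra hb0
      refine hφ hb0 ?_
      rw [AddChar.mulShift_mulShift]
      have hb' : a * b = 0 := hb
      rw [hb', AddChar.mulShift_zero]
    exact ⟨ha.unit, rfl⟩

theorem card_primitive_quot {R : Type*} [CommRing R] [IsDedekindDomain R]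
    (hfin : ∀ I : Ideal R, I ≠ ⊥ → Finite (R ⧸ I)) (I : Ideal R) (hI : I ≠ ⊥) :
    Nat.card {φ : AddChar (R ⧸ I) ℂ // φ.IsPrimitive} = Nat.card (R ⧸ I)ˣ := by
  obtain ⟨ψ, hψ⟩ := exists_char_radical hfin I hI
  obtain ⟨φ, hφ⟩ := addChar_descend I ψ (fun x hx => by simpa using (hψ x).mpr hx 1)
  have := hfin I hI
  refine card_primitive φ ?_
  intro a ha h
  obtain ⟨a, rfl⟩ := Ideal.Quotient.mk_surjective a
  apply ha
  rw [Ideal.Quotient.eq_zero_iff_mem, ← hψ]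
  intro y
  have := DFunLike.congr_fun h (Ideal.Quotient.mk I y)
  rw [AddChar.mulShift_apply, ← map_mul, hφ] at this
  simpa using this

section HeisAux

open Matrix

/-- Common eigenvectors of commuting families. -/
theorem exists_common_eigenvector {ι V : Type*} [AddCommGroup V] [Module ℂ V]
    [FiniteDimensional ℂ V] [Nontrivial V] (f : ι → Module.End ℂ V)
    (hf : ∀ i j, f i * f j = f j * f i) :
    ∃ v : V, v ≠ 0 ∧ ∃ α : ι → ℂ, ∀ i, f i v = α i • v := by
  have hwf : WellFounded ((· < ·) : Submodule ℂ V → Submodule ℂ V → Prop) := wellFounded_lt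
  obtain ⟨W, ⟨hW0, hWinv⟩, hmin⟩ := hwf.has_min
    {W : Submodule ℂ V | W ≠ ⊥ ∧ ∀ i, ∀ v ∈ W, f i v ∈ W} ⟨⊤, top_ne_bot, fun _ _ _ => trivial⟩
  have hsc : ∀ i, ∃ c : ℂ, ∀ v ∈ W, f i v = c • v := by
    intro i
    have : Nontrivial W := Submodule.nontrivial_iff_ne_bot.mpr hW0
    obtain ⟨c, hc⟩ := Module.End.exists_eigenvalue ((f i).restrict (hWinv i))
    obtain ⟨w, hw⟩ := hc.exists_hasEigenvector
    have hw1 : f i w = c • (w : V) := by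
      have := congrArg Subtype.val hw.apply_eq_smul
      simpa using this
    refine ⟨c, ?_⟩
    let U : Submodule ℂ V := W ⊓ LinearMap.ker (f i - c • 1)
    have hUmem : ∀ v, v ∈ U ↔ v ∈ W ∧ f i v = c • v := by
      intro v
      simp [U, sub_eq_zero]
    have hU : U ∈ {W : Submodule ℂ V | W ≠ ⊥ ∧ ∀ i, ∀ v ∈ W, f i v ∈ W} := by
      refine ⟨?_, ?_⟩
      · intro h
        have : (w : V) ∈ U := (hUmem _).mpr ⟨w.2, hw1⟩
        rw [h, Submodule.mem_bot] at this
        exact hw.2 (Subtype.ext this)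
      · intro j v hv
        rw [hUmem] at hv ⊢
        refine ⟨hWinv j v hv.1, ?_⟩
        have := LinearMap.congr_fun (hf i j) v
        simp only [Module.End.mul_apply] at this
        rw [this, hv.2, map_smul]
    have hUW : U = W := by
      by_contra hne
      exact hmin U hU (lt_of_le_of_ne inf_le_left hne)
    intro v hv
    rw [← hUW] at hv
    exact ((hUmem v).mp hv).2
  obtain ⟨v, hv, hv0⟩ := Submodule.exists_mem_ne_zero_of_ne_bot hW0
  choose c hc using hsc
  exact ⟨v, hv0, c, fun i => hc i v hv⟩

/-- Common eigenvector for an additive one-parameter family of matrices. -/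
theorem exists_eigenchar {R : Type*} [CommRing R] {n : ℕ} (hn : 1 ≤ n)
    (f : R → Matrix (Fin n) (Fin n) ℂ) (h0 : f 0 = 1) (hadd : ∀ a b, f (a + b) = f a * f b) :
    ∃ v : Fin n → ℂ, v ≠ 0 ∧ ∃ α : AddChar R ℂ, ∀ a, f a *ᵥ v = α a • v := by
  have : Nonempty (Fin n) := ⟨⟨0, hn⟩⟩
  obtain ⟨v, hv, α, hα⟩ := exists_common_eigenvector (fun a => (f a).mulVecLin) (by
    intro a b
    refine LinearMap.ext fun w => ?_
    simp [← hadd, add_comm])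
  have hα : ∀ a, f a *ᵥ v = α a • v := fun a => hα a
  refine ⟨v, hv, ⟨α, ?_, ?_⟩, hα⟩
  · have := hα 0
    rw [h0, one_mulVec] at this
    refine smul_left_injective ℂ hv ?_
    simp [← this]
  · intro a b
    refine smul_left_injective ℂ hv ?_
    change α (a + b) • v = (α a * α b) • v
    rw [← hα, hadd, ← mulVec_mulVec, hα, mulVec_smul, hα, smul_smul, mul_comm]

/-- The Schur lemma. -/
theorem schur_scalar {G : Type*} [Group G] {n : ℕ} (hn : 1 ≤ n) (ρ : G →* GL (Fin n) ℂ)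
    (hρ : RepIsIrreducible ρ) (A : Matrix (Fin n) (Fin n) ℂ)
    (hA : ∀ g, A * (ρ g : Matrix (Fin n) (Fin n) ℂ) = (ρ g : Matrix (Fin n) (Fin n) ℂ) * A) :
    ∃ c : ℂ, A = c • 1 := by
  have : Nonempty (Fin n) := ⟨⟨0, hn⟩⟩
  obtain ⟨c, hc⟩ := Module.End.exists_eigenvalue A.mulVecLin
  refine ⟨c, ?_⟩
  have hmem : ∀ v, v ∈ Module.End.eigenspace A.mulVecLin c ↔ A *ᵥ v = c • v := by
    intro v; rw [Module.End.mem_eigenspace_iff]; rfl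
  have hinv : RepInvariant ρ (Module.End.eigenspace A.mulVecLin c) := by
    intro g v hv
    rw [hmem] at hv ⊢
    rw [mulVec_mulVec, hA, ← mulVec_mulVec, hv, mulVec_smul]
  rcases hρ.2 _ hinv with h | h
  · exact absurd h hc
  · have h2 : ∀ v, A *ᵥ v = c • v := fun v => (hmem v).mp (h ▸ Submodule.mem_top)
    refine Matrix.toLin'.injective ?_
    refine LinearMap.ext fun v => ?_
    simp [h2]

/-- The Schrödinger-type action on functions on a ring `S`. -/
def schro {S : Type*} [CommRing S] (ψ : AddChar S ℂ) (x y z : S) : (S → ℂ) →ₗ[ℂ] (S → ℂ) where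
  toFun f := fun s => ψ (z - s * y) * f (s - x)
  map_add' f g := by ext s; simp [mul_add]
  map_smul' c f := by ext s; simp; ring

theorem schro_irred {S : Type*} [CommRing S] [Finite S] (ψ : AddChar S ℂ) (hψ : ψ.IsPrimitive)
    (W : Submodule ℂ (S → ℂ)) (hW : ∀ x y z, ∀ f ∈ W, schro ψ x y z f ∈ W) :
    W = ⊥ ∨ W = ⊤ := by
  classical
  have := Fintype.ofFinite S
  by_cases h : W = ⊥
  · exact Or.inl h
  right
  obtain ⟨f, hf, hf0⟩ := Submodule.exists_mem_ne_zero_of_ne_bot h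
  obtain ⟨i, hi⟩ := Function.ne_iff.mp hf0
  have hi : f i ≠ 0 := hi
  have h1 : (∑ y, schro ψ 0 y (i * y) f) ∈ W := Submodule.sum_mem _ fun y _ => hW _ _ _ f hf
  have h2 : (∑ y, schro ψ 0 y (i * y) f) = ((Fintype.card S : ℂ) * f i) • Pi.single i (1 : ℂ) := by
    ext s
    have e : ∀ y, ψ (i * y - s * y) * f (s - 0) = ψ (y * (i - s)) * f s := by
      intro y; rw [sub_zero]; congr 2; ring
    simp only [Finset.sum_apply, schro, LinearMap.coe_mk, AddHom.coe_mk, e, ← Finset.sum_mul,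
      AddChar.sum_mulShift _ hψ]
    by_cases his : i = s
    · subst his; simp
    · rw [if_neg (sub_ne_zero.mpr his)]
      simp [Ne.symm his]
  have hc : ((Fintype.card S : ℂ) * f i) ≠ 0 :=
    mul_ne_zero (by exact_mod_cast Fintype.card_ne_zero) hi
  have h3 : Pi.single i (1 : ℂ) ∈ W := by
    rw [h2] at h1
    exact (Submodule.smul_mem_iff _ hc).mp h1
  have h4 : ∀ j, Pi.single j (1 : ℂ) ∈ W := by
    intro j
    have := hW (j - i) 0 0 _ h3
    convert this using 1
    ext s
    simp only [schro, LinearMap.coe_mk, AddHom.coe_mk, Pi.single_apply]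
    have : s - (j - i) = i ↔ s = j := by constructor <;> intro h <;> linear_combination h
    simp [this]
  rw [eq_top_iff, ← (Pi.basisFun ℂ S).span_eq, Submodule.span_le]
  rintro _ ⟨j, rfl⟩
  simpa using h4 j

theorem schro_mul {S : Type*} [CommRing S] (ψ : AddChar S ℂ) (x y z x' y' z' : S) (f : S → ℂ) :
    schro ψ x y z (schro ψ x' y' z' f) = schro ψ (x + x') (y + y') (z + z' + x * y') f := by
  ext s
  simp only [schro, LinearMap.coe_mk, AddHom.coe_mk]
  rw [← mul_assoc, ← AddChar.map_add_eq_mul]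
  congr 2 <;> ring

theorem schro_one {S : Type*} [CommRing S] (ψ : AddChar S ℂ) (f : S → ℂ) :
    schro ψ 0 0 0 f = f := by
  ext s
  simp [schro]

/-- The standard representation as linear maps of `ℂ^n`. -/
def stdEnd {R S : Type*} [CommRing R] [CommRing S] (π : R →+* S) {n : ℕ} (e : S ≃ Fin n)
    (ψ : AddChar S ℂ) : Heisenberg R →* Module.End ℂ (Fin n → ℂ) where
  toFun g := (LinearEquiv.funCongrLeft ℂ ℂ e).symm.toLinearMap ∘ₗ
    schro ψ (π g.x) (π g.y) (π g.z) ∘ₗ (LinearEquiv.funCongrLeft ℂ ℂ e).toLinearMap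
  map_one' := by
    refine LinearMap.ext fun f => ?_
    simp only [LinearMap.comp_apply, Heisenberg.one_def, map_zero, schro_one]
    exact (LinearEquiv.funCongrLeft ℂ ℂ e).symm_apply_apply f
  map_mul' g h := by
    refine LinearMap.ext fun f => ?_
    simp only [LinearMap.comp_apply, Heisenberg.mul_def, map_add, map_mul, Module.End.mul_apply,
      LinearEquiv.coe_coe, LinearEquiv.apply_symm_apply, schro_mul]

/-- The standard representation. -/
noncomputable def stdRep {R S : Type*} [CommRing R] [CommRing S] (π : R →+* S) {n : ℕ}
    (e : S ≃ Fin n) (ψ : AddChar S ℂ) : Heisenberg R →* GL (Fin n) ℂ :=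
  MonoidHom.toHomUnits
    (((LinearMap.toMatrixAlgEquiv' (R := ℂ) (n := Fin n)) :
      Module.End ℂ (Fin n → ℂ) →* Matrix (Fin n) (Fin n) ℂ).comp (stdEnd π e ψ))

theorem stdRep_mulVec {R S : Type*} [CommRing R] [CommRing S] (π : R →+* S) {n : ℕ}
    (e : S ≃ Fin n) (ψ : AddChar S ℂ) (g : Heisenberg R) (f : Fin n → ℂ) :
    (stdRep π e ψ g : Matrix (Fin n) (Fin n) ℂ) *ᵥ f =
      (LinearEquiv.funCongrLeft ℂ ℂ e).symm
        (schro ψ (π g.x) (π g.y) (π g.z) (LinearEquiv.funCongrLeft ℂ ℂ e f)) := by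
  change (LinearMap.toMatrix' (stdEnd π e ψ g)) *ᵥ f = _
  rw [LinearMap.toMatrix'_mulVec]
  rfl

theorem stdRep_irred {R S : Type*} [CommRing R] [CommRing S] (π : R →+* S)
    (hπ : Function.Surjective π) {n : ℕ} (hn : 1 ≤ n)
    (e : S ≃ Fin n) (ψ : AddChar S ℂ) (hψ : ψ.IsPrimitive) :
    RepIsIrreducible (stdRep π e ψ) := by
  have : Nonempty (Fin n) := ⟨⟨0, hn⟩⟩
  have : Finite S := Finite.of_equiv _ e.symm
  refine ⟨bot_ne_top, fun W hW => ?_⟩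
  have hWmem : ∀ f, f ∈ W.comap (LinearEquiv.funCongrLeft ℂ ℂ e).symm.toLinearMap ↔
      (LinearEquiv.funCongrLeft ℂ ℂ e).symm f ∈ W := fun f => Iff.rfl
  rcases schro_irred ψ hψ (W.comap (LinearEquiv.funCongrLeft ℂ ℂ e).symm.toLinearMap) (by
    intro x y z f hf
    obtain ⟨x, rfl⟩ := hπ x
    obtain ⟨y, rfl⟩ := hπ y
    obtain ⟨z, rfl⟩ := hπ z
    rw [hWmem] at hf ⊢
    have := hW ⟨x, y, z⟩ _ hf
    rw [stdRep_mulVec, LinearEquiv.apply_symm_apply] at this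
    exact this) with h | h
  · left
    rw [eq_bot_iff]
    intro f hf
    have : LinearEquiv.funCongrLeft ℂ ℂ e f ∈
        W.comap (LinearEquiv.funCongrLeft ℂ ℂ e).symm.toLinearMap := by
      rw [hWmem, LinearEquiv.symm_apply_apply]; exact hf
    rw [h, Submodule.mem_bot] at this
    exact (LinearEquiv.map_eq_zero_iff _).mp this
  · right
    rw [eq_top_iff]
    intro f _
    have : LinearEquiv.funCongrLeft ℂ ℂ e f ∈
        W.comap (LinearEquiv.funCongrLeft ℂ ℂ e).symm.toLinearMap := by
      rw [h]; trivial
    rwa [hWmem, LinearEquiv.symm_apply_apply] at this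

theorem stdRep_center {R S : Type*} [CommRing R] [CommRing S] (π : R →+* S) {n : ℕ}
    (e : S ≃ Fin n) (ψ : AddChar S ℂ) (z : R) :
    (stdRep π e ψ ⟨0, 0, z⟩ : Matrix (Fin n) (Fin n) ℂ) = ψ (π z) • 1 := by
  refine Matrix.toLin'.injective (LinearMap.ext fun v => ?_)
  rw [Matrix.toLin'_apply, stdRep_mulVec]
  have : schro ψ (π 0) (π 0) (π z) (LinearEquiv.funCongrLeft ℂ ℂ e v)
      = ψ (π z) • (LinearEquiv.funCongrLeft ℂ ℂ e v) := by
    ext s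
    simp [schro]
  simp only [this, map_smul, LinearEquiv.symm_apply_apply]
  simp

/-- Characters of the Heisenberg group are trivial on the centre. -/
theorem heis_char_center {R : Type*} [CommRing R] (χ : Heisenberg R →* ℂˣ) (z : R) :
    χ ⟨0, 0, z⟩ = 1 := by
  have h1 : (⟨1, 0, 0⟩ : Heisenberg R) * ⟨0, z, 0⟩ = ⟨0, 0, z⟩ * (⟨0, z, 0⟩ * ⟨1, 0, 0⟩) := by
    simp [Heisenberg.mul_def]
  have h2 := congrArg χ h1
  rw [map_mul, map_mul, map_mul, mul_comm (χ ⟨1, 0, 0⟩)] at h2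
  exact right_eq_mul.mp h2

theorem trace_center_twist {R : Type*} [CommRing R] {n : ℕ} (ρ₁ ρ₂ : Heisenberg R →* GL (Fin n) ℂ)
    (h : TwistEquiv ρ₁ ρ₂) (z : R) :
    Matrix.trace (ρ₁ ⟨0, 0, z⟩ : Matrix (Fin n) (Fin n) ℂ) =
      Matrix.trace (ρ₂ ⟨0, 0, z⟩ : Matrix (Fin n) (Fin n) ℂ) := by
  obtain ⟨χ, T, hT⟩ := h
  rw [hT, heis_char_center, Units.val_one, one_smul, Units.val_mul, Units.val_mul,
    Matrix.trace_mul_cycle, ← Units.val_mul, inv_mul_cancel, Units.val_one, one_mul]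

theorem rep_classify {R : Type*} [CommRing R] {n : ℕ} (hn : 1 ≤ n)
    (hfin : ∀ I : Ideal R, I ≠ ⊥ → Finite (R ⧸ I)) (hchar : (n : R) ≠ 0)
    (ρ : Heisenberg R →* GL (Fin n) ℂ) (hρ : RepIsIrreducible ρ) :
    ∃ I : Ideal R, I ≠ ⊥ ∧ Nat.card (R ⧸ I) = n ∧ ∃ φ : AddChar (R ⧸ I) ℂ, φ.IsPrimitive ∧
      ∀ e : (R ⧸ I) ≃ Fin n, TwistEquiv ρ (stdRep (Ideal.Quotient.mk I) e φ) := by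
  classical
  have hne : Nonempty (Fin n) := ⟨⟨0, hn⟩⟩
  set M : Heisenberg R → Matrix (Fin n) (Fin n) ℂ := fun g => (ρ g : Matrix (Fin n) (Fin n) ℂ)
    with hM
  have Mmul : ∀ g h, M (g * h) = M g * M h := fun g h => by simp [hM]
  have Mone : M 1 = 1 := by simp [hM]
  -- the central character
  have hZ : ∀ z, ∃ c : ℂ, M ⟨0, 0, z⟩ = c • 1 := fun z => schur_scalar hn ρ hρ _ fun g => by
    change M _ * M g = M g * M _
    rw [← Mmul, ← Mmul]
    congr 1
    ext <;> simp [Heisenberg.mul_def, add_comm]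
  choose ψ₀ hψ₀ using hZ
  have one_inj : ∀ a b : ℂ, a • (1 : Matrix (Fin n) (Fin n) ℂ) = b • 1 → a = b := fun a b h => by
    have := congrFun (congrFun h hne.some) hne.some
    simpa using this
  obtain ⟨ψ, hψ⟩ : ∃ ψ : AddChar R ℂ, ∀ z, M ⟨0, 0, z⟩ = ψ z • 1 := by
    refine ⟨⟨ψ₀, ?_, ?_⟩, hψ₀⟩
    · apply one_inj
      rw [← hψ₀, one_smul, ← Mone]; rfl
    · intro a b
      apply one_inj
      rw [← hψ₀, mul_smul, ← hψ₀ b, ← one_mul (M ⟨0, 0, b⟩), ← smul_mul_assoc, ← hψ₀, ← Mmul]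
      congr 1
      ext <;> simp [Heisenberg.mul_def]
  have hXY : ∀ x y, M ⟨x, 0, 0⟩ * M ⟨0, y, 0⟩ = ψ (x * y) • (M ⟨0, y, 0⟩ * M ⟨x, 0, 0⟩) := by
    intro x y
    rw [← one_mul (M ⟨0, y, 0⟩ * M ⟨x, 0, 0⟩), ← smul_mul_assoc, ← hψ, ← Mmul, ← Mmul, ← Mmul]
    congr 1
    ext <;> simp [Heisenberg.mul_def]
  have hYX : ∀ x y, M ⟨0, y, 0⟩ * M ⟨x, 0, 0⟩ = ψ (-(x * y)) • (M ⟨x, 0, 0⟩ * M ⟨0, y, 0⟩) := by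
    intro x y
    rw [hXY, smul_smul, ← AddChar.map_add_eq_mul]
    simp
  have hdec : ∀ g : Heisenberg R, M g = ψ g.z • (M ⟨0, g.y, 0⟩ * M ⟨g.x, 0, 0⟩) := by
    intro g
    rw [← one_mul (M ⟨0, g.y, 0⟩ * M ⟨g.x, 0, 0⟩), ← smul_mul_assoc, ← hψ, ← Mmul, ← Mmul]
    congr 1
    ext <;> simp [Heisenberg.mul_def]
  -- the radical
  let I : Ideal R :=
    { carrier := {x | ∀ y, ψ (x * y) = 1}
      add_mem' := fun {a b} ha hb y => by
        rw [add_mul, AddChar.map_add_eq_mul, ha y, hb y, one_mul]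
      zero_mem' := fun y => by simp
      smul_mem' := fun c x hx y => by
        rw [smul_eq_mul, mul_comm c x, mul_assoc]; exact hx _ }
  have hI : ∀ x, x ∈ I ↔ ∀ y, ψ (x * y) = 1 := fun x => Iff.rfl
  have hnI : (n : R) ∈ I := by
    rw [hI]
    intro y
    have h1 := congrArg Matrix.det (hXY 1 y)
    rw [Matrix.det_smul, Matrix.det_mul, Matrix.det_mul, Fintype.card_fin, one_mul,
      mul_comm (M ⟨1, 0, 0⟩).det] at h1
    have hd : ∀ g, (M g).det ≠ 0 := fun g =>
      ((Matrix.isUnit_iff_isUnit_det _).mp (ρ g).isUnit).ne_zero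
    have h2 : ψ y ^ n = 1 := by
      refine mul_right_cancel₀ (mul_ne_zero (hd ⟨0, y, 0⟩) (hd ⟨1, 0, 0⟩)) ?_
      rw [← h1, one_mul]
    rw [← nsmul_eq_mul, AddChar.map_nsmul_eq_pow, h2]
  have hI0 : I ≠ ⊥ := by
    intro h
    rw [h] at hnI
    exact hchar (by simpa using hnI)
  have hfinI := hfin I hI0
  have hfintype := Fintype.ofFinite (R ⧸ I)
  obtain ⟨φ, hφ⟩ := addChar_descend I ψ (fun x hx => by simpa using (hI x).mp hx 1)
  have hprim : φ.IsPrimitive := by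
    intro a ha h
    obtain ⟨a, rfl⟩ := Ideal.Quotient.mk_surjective a
    apply ha
    rw [Ideal.Quotient.eq_zero_iff_mem, hI]
    intro y
    have := DFunLike.congr_fun h (Ideal.Quotient.mk I y)
    rw [AddChar.mulShift_apply, ← map_mul, hφ] at this
    simpa using this
  -- eigencharacters
  obtain ⟨w, hw, α, hα⟩ := exists_eigenchar hn (fun x : R => M ⟨x, 0, 0⟩) Mone (fun a b => by
    rw [← Mmul]; congr 1; ext <;> simp [Heisenberg.mul_def])
  obtain ⟨v, hv, β, hβ⟩ := exists_eigenchar hn (fun y : R => M ⟨0, y, 0⟩) Mone (fun a b => by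
    rw [← Mmul]; congr 1; ext <;> simp [Heisenberg.mul_def])
  have hXadd : ∀ a b, M ⟨a + b, 0, 0⟩ = M ⟨a, 0, 0⟩ * M ⟨b, 0, 0⟩ := fun a b => by
    rw [← Mmul]; congr 1; ext <;> simp [Heisenberg.mul_def]
  have hXI : ∀ i ∈ I, M ⟨i, 0, 0⟩ = α i • 1 := by
    intro i hi
    obtain ⟨c, hc⟩ := schur_scalar hn ρ hρ (M ⟨i, 0, 0⟩) (fun g => by
      change M _ * M g = M g * M _
      rw [hdec g, mul_smul_comm, smul_mul_assoc, ← mul_assoc, hXY, (hI i).mp hi, one_smul,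
        mul_assoc, mul_assoc, ← hXadd, ← hXadd, add_comm])
    have h1 := hα i
    simp only [hc, smul_mulVec, one_mulVec] at h1
    rw [hc, smul_left_injective ℂ hw h1]
  have αneg : ∀ x, α (-x) * α x = 1 := fun x => by
    rw [← AddChar.map_add_eq_mul]; simp
  -- the adapted vectors
  let u₀ : R → (Fin n → ℂ) := fun x => α (-x) • (M ⟨x, 0, 0⟩ *ᵥ v)
  have hu₀ : ∀ x i, i ∈ I → u₀ (x + i) = u₀ x := by
    intro x i hi
    simp only [u₀]
    rw [hXadd, hXI i hi, mul_smul_comm, mul_one, smul_mulVec, smul_smul, neg_add,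
      AddChar.map_add_eq_mul, mul_assoc, αneg, mul_one]
  have hs := Ideal.Quotient.mk_surjective (I := I)
  let u : R ⧸ I → (Fin n → ℂ) := fun s => u₀ (Function.surjInv hs s)
  have hu : ∀ x, u (Ideal.Quotient.mk I x) = u₀ x := by
    intro x
    have h1 := Ideal.Quotient.eq.mp (Function.surjInv_eq hs (Ideal.Quotient.mk I x))
    have h2 := hu₀ x _ h1
    rw [add_sub_cancel] at h2
    exact h2
  let χ₀ : Heisenberg R →* ℂ :=
    { toFun := fun g => α g.x * β g.y
      map_one' := by simp [Heisenberg.one_def]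
      map_mul' := fun g h => by
        simp only [Heisenberg.mul_def, AddChar.map_add_eq_mul]; ring }
  have hact : ∀ g : Heisenberg R, ∀ s, M g *ᵥ u s =
      (α g.x * β g.y) • φ (Ideal.Quotient.mk I g.z - (s + Ideal.Quotient.mk I g.x) *
        Ideal.Quotient.mk I g.y) • u (s + Ideal.Quotient.mk I g.x) := by
    intro g s
    obtain ⟨a, rfl⟩ := hs s
    rw [← map_add, ← map_mul, ← map_sub, hφ, hu, hu, hdec]
    simp only [u₀]
    have e1 : M ⟨0, g.y, 0⟩ *ᵥ (M ⟨a + g.x, 0, 0⟩ *ᵥ v) =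
        (ψ (-((a + g.x) * g.y)) * β g.y) • (M ⟨a + g.x, 0, 0⟩ *ᵥ v) := by
      rw [mulVec_mulVec, hYX, smul_mulVec, ← mulVec_mulVec, hβ, mulVec_smul, smul_smul]
    rw [mulVec_smul, smul_mulVec, ← mulVec_mulVec, mulVec_mulVec v, ← hXadd, add_comm g.x a, e1,
      smul_smul, smul_smul, smul_smul, smul_smul]
    congr 1
    rw [sub_eq_add_neg, AddChar.map_add_eq_mul, neg_add a, AddChar.map_add_eq_mul]
    linear_combination (-(α (-a) * ψ g.z * ψ (-((a + g.x) * g.y)) * β g.y)) * αneg g.x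
  let T : (R ⧸ I → ℂ) →ₗ[ℂ] (Fin n → ℂ) := Fintype.linearCombination ℂ u
  have hT : ∀ f, T f = ∑ s, f s • u s := fun f => Fintype.linearCombination_apply ℂ u f
  have hTact : ∀ g : Heisenberg R, ∀ f, M g *ᵥ T f = (α g.x * β g.y) •
      T (schro φ (Ideal.Quotient.mk I g.x) (Ideal.Quotient.mk I g.y) (Ideal.Quotient.mk I g.z) f) := by
    intro g f
    rw [hT, hT, ← Equiv.sum_comp (Equiv.addRight (Ideal.Quotient.mk I g.x))
      (fun s => schro φ _ _ _ f s • u s), Finset.smul_sum, Matrix.mulVec_sum]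
    refine Finset.sum_congr rfl fun s _ => ?_
    rw [mulVec_smul, hact]
    simp only [schro, LinearMap.coe_mk, AddHom.coe_mk, Equiv.coe_addRight, add_sub_cancel_right]
    generalize u (s + Ideal.Quotient.mk I g.x) = U
    simp only [smul_smul]
    congr 1
    ring
  have hχne : ∀ g : Heisenberg R, α g.x * β g.y ≠ 0 := fun g =>
    (MonoidHom.toHomUnits χ₀ g).ne_zero
  have hker : LinearMap.ker T = ⊥ := by
    rcases schro_irred φ hprim (LinearMap.ker T) (by
      intro x y z f hf
      obtain ⟨x, rfl⟩ := hs x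
      obtain ⟨y, rfl⟩ := hs y
      obtain ⟨z, rfl⟩ := hs z
      rw [LinearMap.mem_ker] at hf ⊢
      have h1 := hTact ⟨x, y, z⟩ f
      rw [hf, mulVec_zero] at h1
      exact (smul_eq_zero.mp h1.symm).resolve_left (hχne ⟨x, y, z⟩)) with h | h
    · exact h
    · exfalso
      have h1 : (Pi.single 0 1 : R ⧸ I → ℂ) ∈ LinearMap.ker T := by rw [h]; trivial
      rw [LinearMap.mem_ker] at h1
      have h2 : T (Pi.single 0 1) = u 0 := by
        simp [T, Fintype.linearCombination_apply_single]
      rw [h2, ← map_zero (Ideal.Quotient.mk I), hu] at h1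
      simp only [u₀, neg_zero, AddChar.map_zero_eq_one, one_smul] at h1
      have h3 : M ⟨0, 0, 0⟩ = 1 := Mone
      rw [h3, one_mulVec] at h1
      exact hv h1
  have hrange : LinearMap.range T = ⊤ := by
    rcases hρ.2 (LinearMap.range T) (by
      rintro g _ ⟨f, rfl⟩
      change M g *ᵥ T f ∈ _
      rw [hTact]
      exact Submodule.smul_mem _ _ ⟨_, rfl⟩) with h | h
    · exfalso
      have h1 : T (Pi.single 0 1) = 0 := by
        have : T (Pi.single 0 1) ∈ LinearMap.range T := ⟨_, rfl⟩
        rw [h] at this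
        simpa using this
      have h2 : (Pi.single 0 1 : R ⧸ I → ℂ) ∈ LinearMap.ker T := h1
      rw [hker, Submodule.mem_bot] at h2
      have := congrFun h2 0
      simp at this
    · exact h
  let E : (R ⧸ I → ℂ) ≃ₗ[ℂ] (Fin n → ℂ) :=
    LinearEquiv.ofBijective T ⟨LinearMap.ker_eq_bot.mp hker, LinearMap.range_eq_top.mp hrange⟩
  have hE : ∀ f, E f = T f := fun f => rfl
  refine ⟨I, hI0, ?_, φ, hprim, fun e => ?_⟩
  · have := E.finrank_eq
    rw [Module.finrank_fintype_fun_eq_card, Module.finrank_fintype_fun_eq_card,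
      Fintype.card_fin] at this
    rw [Nat.card_eq_fintype_card, this]
  · let F : (Fin n → ℂ) ≃ₗ[ℂ] (Fin n → ℂ) := (LinearEquiv.funCongrLeft ℂ ℂ e).trans E
    let TT : GL (Fin n) ℂ :=
      ⟨LinearMap.toMatrix' F.toLinearMap, LinearMap.toMatrix' F.symm.toLinearMap,
        by rw [← LinearMap.toMatrix'_comp]; simp, by rw [← LinearMap.toMatrix'_comp]; simp⟩
    have hTT : ∀ f, (TT : Matrix (Fin n) (Fin n) ℂ) *ᵥ f = F f := fun f =>
      LinearMap.toMatrix'_mulVec _ _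
    refine ⟨MonoidHom.toHomUnits χ₀, TT, fun g => ?_⟩
    have hχ : ((MonoidHom.toHomUnits χ₀ g : ℂˣ) : ℂ) = α g.x * β g.y := rfl
    rw [hχ]
    have h1 : M g * (TT : Matrix (Fin n) (Fin n) ℂ) = (α g.x * β g.y) •
        ((TT : Matrix (Fin n) (Fin n) ℂ) *
          (stdRep (Ideal.Quotient.mk I) e φ g : Matrix (Fin n) (Fin n) ℂ)) := by
      refine Matrix.toLin'.injective (LinearMap.ext fun f => ?_)
      rw [Matrix.toLin'_apply, Matrix.toLin'_apply, smul_mulVec, ← mulVec_mulVec, ← mulVec_mulVec,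
        hTT, hTT, stdRep_mulVec]
      simp only [F, LinearEquiv.trans_apply, LinearEquiv.apply_symm_apply, hE, hTact]
    rw [Units.val_mul, Units.val_mul, ← smul_mul_assoc, ← h1, mul_assoc, ← Units.val_mul,
      mul_inv_cancel, Units.val_one, mul_one]

theorem nat_card_twist {R : Type*} [CommRing R] {n : ℕ} (hn : 1 ≤ n)
    (hfin : ∀ I : Ideal R, I ≠ ⊥ → Finite (R ⧸ I)) (hchar : (n : R) ≠ 0)  :
    twistRepCount (Heisenberg R) n = Nat.card (Σ I : {I : Ideal R // I ≠ ⊥ ∧ Nat.card (R ⧸ I) = n},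
      {φ : AddChar (R ⧸ (I : Ideal R)) ℂ // φ.IsPrimitive}) := by
  have hne : Nonempty (Fin n) := ⟨⟨0, hn⟩⟩
  have he : ∀ I : {I : Ideal R // I ≠ ⊥ ∧ Nat.card (R ⧸ I) = n},
      Nonempty ((R ⧸ (I : Ideal R)) ≃ Fin n) := fun I => by
    have := hfin I.1 I.2.1
    exact ⟨Finite.equivFinOfCardEq I.2.2⟩
  let e := fun I => (he I).some
  unfold twistRepCount
  symm
  refine Nat.card_congr (Equiv.ofBijective (fun p => Quot.mk _
    ⟨stdRep (Ideal.Quotient.mk (p.1 : Ideal R)) (e p.1) p.2.1,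
      stdRep_irred _ Ideal.Quotient.mk_surjective hn _ _ p.2.2⟩) ⟨?_, ?_⟩)
  · rintro ⟨⟨I, hI⟩, φ, hφ⟩ ⟨⟨J, hJ⟩, φ', hφ'⟩ h
    have key : ∀ z, φ (Ideal.Quotient.mk I z) = φ' (Ideal.Quotient.mk J z) := by
      intro z
      have h1 := congrArg (Quot.lift (fun ρ : {ρ : Heisenberg R →* GL (Fin n) ℂ // RepIsIrreducible ρ}
        => Matrix.trace (ρ.1 ⟨0, 0, z⟩ : Matrix (Fin n) (Fin n) ℂ))
        (fun a b hab => trace_center_twist a.1 b.1 hab z)) h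
      simp only [stdRep_center, Matrix.trace_smul, Matrix.trace_one, Fintype.card_fin,
        smul_eq_mul] at h1
      exact mul_right_cancel₀ (by exact_mod_cast (by omega : n ≠ 0)) h1
    have rad : ∀ (I : Ideal R) (φ : AddChar (R ⧸ I) ℂ), φ.IsPrimitive →
        ∀ x, x ∈ I ↔ ∀ y, φ (Ideal.Quotient.mk I (x * y)) = 1 := by
      intro I φ hφ x
      constructor
      · intro hx y
        rw [Ideal.Quotient.eq_zero_iff_mem.mpr (Ideal.mul_mem_right _ _ hx),
          AddChar.map_zero_eq_one]
      · intro h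
        by_contra hx
        refine hφ (a := Ideal.Quotient.mk I x) (by rwa [Ne, Ideal.Quotient.eq_zero_iff_mem]) ?_
        ext s
        obtain ⟨y, rfl⟩ := Ideal.Quotient.mk_surjective s
        rw [AddChar.mulShift_apply, ← map_mul, h]
        simp
    have hIJ : I = J := by
      ext x
      rw [rad I φ hφ, rad J φ' hφ']
      simp only [key]
    subst hIJ
    have : φ = φ' := by
      ext s
      obtain ⟨y, rfl⟩ := Ideal.Quotient.mk_surjective s
      exact key y
    subst this
    rfl
  · intro q
    induction q using Quot.ind with
    | mk ρ =>
      obtain ⟨I, hI0, hc, φ, hφ, h⟩ := rep_classify hn hfin hchar ρ.1 ρ.2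
      refine ⟨⟨⟨I, hI0, hc⟩, φ, hφ⟩, ?_⟩
      symm
      exact Quot.sound (h (e ⟨I, hI0, hc⟩))

end HeisAux

open scoped NumberField in
/-- **Twist-representation zeta functions of Heisenberg groups over number rings**
(Ezzat; Stasinski–Voll): for a number field `K` with ring of integers `𝓞` and `n ≥ 1`,
`r̃ₙ(H(𝓞)) = ∑_{I ⊴ 𝓞, |𝓞:I| = n} |(𝓞/I)ˣ|`; equivalently
`ζ^{~irr}_{H(𝓞)}(s) = ζ_K(s-1)/ζ_K(s)`. -/
theorem twist_representation_count_heisenberg_number_ring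
    (K : Type*) [Field K] [NumberField K] (n : ℕ) (hn : 1 ≤ n) :
    twistRepCount (Heisenberg (𝓞 K)) n
      = ∑ᶠ I : {I : Ideal (𝓞 K) // I ≠ ⊥ ∧ Ideal.absNorm I = n}, Nat.card ((𝓞 K ⧸ (I : Ideal (𝓞 K)))ˣ) := by
  classical
  have hfin : ∀ I : Ideal (𝓞 K), I ≠ ⊥ → Finite (𝓞 K ⧸ I) := fun I hI =>
    Ideal.finiteQuotientOfFreeOfNeBot I hI
  have hchar : (n : 𝓞 K) ≠ 0 := by exact_mod_cast (by omega : n ≠ 0)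
  rw [nat_card_twist hn hfin hchar]
  have hset : Finite {I : Ideal (𝓞 K) // I ≠ ⊥ ∧ Ideal.absNorm I = n} :=
    ((Ideal.finite_setOfPred_absNorm_eq (S := 𝓞 K) n).subset (fun I hI => hI.2)).to_subtype
  change Nat.card (Σ I : {I : Ideal (𝓞 K) // I ≠ ⊥ ∧ Ideal.absNorm I = n},
      {φ : AddChar (𝓞 K ⧸ (I : Ideal (𝓞 K))) ℂ // φ.IsPrimitive}) = _
  have := Fintype.ofFinite {I : Ideal (𝓞 K) // I ≠ ⊥ ∧ Ideal.absNorm I = n}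
  have hfib : ∀ I : {I : Ideal (𝓞 K) // I ≠ ⊥ ∧ Ideal.absNorm I = n},
      Finite {φ : AddChar (𝓞 K ⧸ (I : Ideal (𝓞 K))) ℂ // φ.IsPrimitive} := fun I => by
    have := hfin I.1 I.2.1
    infer_instance
  rw [Nat.card_sigma, finsum_eq_sum_of_fintype]
  exact Finset.sum_congr rfl fun I _ => card_primitive_quot hfin I.1 I.2.1
end

section
/- Let p be an odd prime. The representation zeta function of SL₂(ℤ_p) vanishes p-adically at s = −2: the series ∑_{n≥1} rₙ(SL₂(ℤ_p))·n², with terms regarded as elements of ℚ_p, converges in ℚ_p and its sum equals 0. -/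
open scoped MatrixGroups

/-- A matrix representation of a topological group is continuous if it is continuous into
`GLₙ(ℂ)` with its standard topology, i.e. the map on matrix entries is continuous. -/
def RepContinuous {G : Type*} [Group G] [TopologicalSpace G] {n : ℕ}
    (ρ : G →* GL (Fin n) ℂ) : Prop :=
  Continuous fun g : G => (ρ g : Matrix (Fin n) (Fin n) ℂ)

/-- `rₙ(G)` for a topological group `G`: the number of isomorphism classes of continuous
`n`-dimensional irreducible complex representations of `G`. -/
noncomputable def contIrrRepCount (G : Type*) [Group G] [TopologicalSpace G] (n : ℕ) : ℕ :=
  Nat.card (Quot fun ρ₁ ρ₂ : {ρ : G →* GL (Fin n) ℂ // RepContinuous ρ ∧ RepIsIrreducible ρ} =>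
    RepIso ρ₁.1 ρ₂.1)

/-- The special linear group over a topological ring carries the topology induced from the
space of matrices. -/
noncomputable instance (n : Type*) [DecidableEq n] [Fintype n]
    (R : Type*) [CommRing R] [TopologicalSpace R] :
    TopologicalSpace (Matrix.SpecialLinearGroup n R) :=
  inferInstanceAs (TopologicalSpace {A : Matrix n n R // A.det = 1})


section Wedderburn

/-- The matrix representation attached to an algebra homomorphism out of a group algebra. -/
noncomputable def repOfAlgHom {G Q : Type*} [Group G] [Group Q] (q : G →* Q) {n : ℕ}
    (φ : MonoidAlgebra ℂ Q →ₐ[ℂ] Matrix (Fin n) (Fin n) ℂ) : G →* GL (Fin n) ℂ :=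
  (((φ : MonoidAlgebra ℂ Q →* Matrix (Fin n) (Fin n) ℂ).comp (MonoidAlgebra.of ℂ Q)).comp
    q).toHomUnits

theorem repOfAlgHom_coe {G Q : Type*} [Group G] [Group Q] (q : G →* Q) {n : ℕ}
    (φ : MonoidAlgebra ℂ Q →ₐ[ℂ] Matrix (Fin n) (Fin n) ℂ) (g : G) :
    (repOfAlgHom q φ g : Matrix (Fin n) (Fin n) ℂ) = φ (MonoidAlgebra.of ℂ Q (q g)) := rfl

/-- A subspace stable under the group is stable under the group algebra. -/
theorem algHom_stable {Q : Type*} [Group Q] {n : ℕ}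
    (φ : MonoidAlgebra ℂ Q →ₐ[ℂ] Matrix (Fin n) (Fin n) ℂ) (W : Submodule ℂ (Fin n → ℂ))
    (h : ∀ g : Q, ∀ v ∈ W, (φ (MonoidAlgebra.of ℂ Q g)).mulVec v ∈ W)
    (a : MonoidAlgebra ℂ Q) : ∀ v ∈ W, (φ a).mulVec v ∈ W := by
  induction a using MonoidAlgebra.induction_on with
  | of g => exact h g
  | add a b ha hb =>
    intro v hv
    rw [map_add, Matrix.add_mulVec]
    exact W.add_mem (ha v hv) (hb v hv)
  | smul c a ha =>
    intro v hv
    rw [map_smul, Matrix.smul_mulVec]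
    exact W.smul_mem _ (ha v hv)

theorem eq_bot_or_top_of_matrix_stable {n : ℕ} (W : Submodule ℂ (Fin n → ℂ))
    (h : ∀ A : Matrix (Fin n) (Fin n) ℂ, ∀ v ∈ W, A.mulVec v ∈ W) : W = ⊥ ∨ W = ⊤ := by
  by_cases hW : W = ⊥
  · exact Or.inl hW
  right
  obtain ⟨v, hv, hv0⟩ := W.ne_bot_iff.1 hW
  obtain ⟨j, hj⟩ : ∃ j, v j ≠ 0 := by
    by_contra! hh
    exact hv0 (funext hh)
  rw [eq_top_iff]
  intro w _
  have := h (Matrix.vecMulVec w (Pi.single j (v j)⁻¹)) v hv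
  rw [Matrix.vecMulVec_mulVec] at this
  simpa [hj] using this

theorem repIso_equivalence {G : Type*} [Group G] {n : ℕ} :
    Equivalence (fun ρ₁ ρ₂ : G →* GL (Fin n) ℂ => RepIso ρ₁ ρ₂) where
  refl ρ := ⟨1, by simp⟩
  symm := by
    rintro ρ₁ ρ₂ ⟨T, hT⟩
    refine ⟨T⁻¹, fun g => ?_⟩
    rw [← hT g]; group
  trans := by
    rintro ρ₁ ρ₂ ρ₃ ⟨T, hT⟩ ⟨S, hS⟩
    refine ⟨S * T, fun g => ?_⟩
    rw [← hS g, ← hT g]; group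

/-- Embedding a matrix into the `i`-th component of a product of matrix algebras and pulling it
back. -/
theorem exists_intertwiner {Q : Type*} [Group Q] {m : ℕ} {d : Fin m → ℕ}
    (Φ : MonoidAlgebra ℂ Q ≃ₐ[ℂ] Π i, Matrix (Fin (d i)) (Fin (d i)) ℂ) {n : ℕ}
    (ψ : MonoidAlgebra ℂ Q →ₐ[ℂ] Matrix (Fin n) (Fin n) ℂ)
    (h0 : (⊥ : Submodule ℂ (Fin n → ℂ)) ≠ ⊤)
    (hirr : ∀ W : Submodule ℂ (Fin n → ℂ), (∀ a, ∀ v ∈ W, (ψ a).mulVec v ∈ W) →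
      W = ⊥ ∨ W = ⊤) :
    ∃ i, ∃ L : (Fin (d i) → ℂ) ≃ₗ[ℂ] (Fin n → ℂ),
      ∀ a x, L ((Φ a i).mulVec x) = (ψ a).mulVec (L x) := by
  classical
  obtain ⟨v, -, hv⟩ := (Submodule.ne_bot_iff _).1 h0.symm
  have hsum : ∑ i, ∑ j, (ψ (Φ.symm (Pi.single i (Matrix.vecMulVec (Pi.single j 1)
      (Pi.single j 1))))).mulVec v = v := by
    have h1 : ∑ i, ∑ j, (Pi.single i (Matrix.vecMulVec (Pi.single j 1)
      (Pi.single j 1)) : Π i, Matrix (Fin (d i)) (Fin (d i)) ℂ) = 1 := by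
      funext k
      simp only [Finset.sum_apply]
      rw [Finset.sum_eq_single k]
      · simp only [Pi.single_eq_same]
        ext a b
        simp [Matrix.sum_apply, Matrix.vecMulVec_apply, Matrix.one_apply, Pi.single_apply]
      · intro b _ hb
        refine Finset.sum_eq_zero fun j _ => ?_
        rw [Pi.single_eq_of_ne (Ne.symm hb)]
      · simp
    calc _ = (ψ (Φ.symm (∑ i, ∑ j, (Pi.single i (Matrix.vecMulVec (Pi.single j 1)
      (Pi.single j 1)) : Π i, Matrix (Fin (d i)) (Fin (d i)) ℂ)))).mulVec v := by
            simp only [map_sum, Matrix.sum_mulVec]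
      _ = v := by rw [h1]; simp
  obtain ⟨i, j, hij⟩ : ∃ i, ∃ j, (ψ (Φ.symm (Pi.single i (Matrix.vecMulVec (Pi.single j 1)
      (Pi.single j 1))))).mulVec v ≠ 0 := by
    by_contra! hh
    apply hv
    rw [← hsum]
    exact Finset.sum_eq_zero fun i _ => Finset.sum_eq_zero fun j _ => hh i j
  let L : (Fin (d i) → ℂ) →ₗ[ℂ] (Fin n → ℂ) :=
    { toFun := fun x => (ψ (Φ.symm (Pi.single i (Matrix.vecMulVec x (Pi.single j 1))))).mulVec v
      map_add' := by
        intro x y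
        rw [Matrix.add_vecMulVec, Pi.single_add, map_add, map_add, Matrix.add_mulVec]
      map_smul' := by
        intro c x
        rw [Matrix.smul_vecMulVec, Pi.single_smul, map_smul, map_smul, Matrix.smul_mulVec]
        rfl }
  have hL : ∀ a x, L ((Φ a i).mulVec x) = (ψ a).mulVec (L x) := by
    intro a x
    change (ψ (Φ.symm (Pi.single i (Matrix.vecMulVec ((Φ a i).mulVec x) (Pi.single j 1))))).mulVec v
      = (ψ a).mulVec ((ψ (Φ.symm (Pi.single i (Matrix.vecMulVec x (Pi.single j 1))))).mulVec v)
    rw [Matrix.mulVec_mulVec, ← map_mul]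
    congr 2
    apply Φ.injective
    rw [map_mul, Φ.apply_symm_apply, Φ.apply_symm_apply, ← Matrix.mul_vecMulVec]
    funext k
    by_cases hk : k = i
    · subst hk; simp
    · simp [Pi.single_eq_of_ne hk]
  have hne : L (Pi.single j 1) ≠ 0 := hij
  have hker : LinearMap.ker L = ⊥ := by
    rcases eq_bot_or_top_of_matrix_stable (LinearMap.ker L) (by
      intro A w hw
      have := hL (Φ.symm (Pi.single i A)) w
      rw [Φ.apply_symm_apply, Pi.single_eq_same] at this
      rw [LinearMap.mem_ker] at hw ⊢
      rw [this, hw, Matrix.mulVec_zero]) with h | h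
    · exact h
    · exact absurd (LinearMap.mem_ker.1 (h ▸ Submodule.mem_top : Pi.single j 1 ∈ LinearMap.ker L)) hne
  have hrange : LinearMap.range L = ⊤ := by
    rcases hirr (LinearMap.range L) (by
      rintro a _ ⟨x, rfl⟩
      exact ⟨_, hL a x⟩) with h | h
    · exact absurd ((Submodule.mem_bot ℂ).1 (h ▸ LinearMap.mem_range_self L (Pi.single j 1))) hne
    · exact h
  exact ⟨i, LinearEquiv.ofBijective L ⟨LinearMap.ker_eq_bot.1 hker, LinearMap.range_eq_top.1 hrange⟩,
    hL⟩

theorem count_reps {G : Type*} [Group G] (N : Subgroup G) [N.Normal] [Finite (G ⧸ N)] :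
    ∃ (m : ℕ) (d : Fin m → ℕ), (∀ i, 0 < d i) ∧ ∑ i, d i ^ 2 = Nat.card (G ⧸ N) ∧
      ∀ n : ℕ, Nat.card (Quot fun ρ₁ ρ₂ : {ρ : G →* GL (Fin n) ℂ //
        N ≤ ρ.ker ∧ RepIsIrreducible ρ} => RepIso ρ₁.1 ρ₂.1) =
        (Finset.univ.filter fun i => d i = n).card := by
  classical
  have : NeZero (Nat.card (G ⧸ N) : ℂ) := ⟨by exact_mod_cast Nat.card_pos.ne'⟩
  have : Fintype (G ⧸ N) := Fintype.ofFinite _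
  have : Module.Finite ℂ (MonoidAlgebra ℂ (G ⧸ N)) :=
    Module.Finite.equiv (MonoidAlgebra.coeffLinearEquiv ℂ).symm
  obtain ⟨m, d, hd, ⟨Φ⟩⟩ :=
    IsSemisimpleRing.exists_algEquiv_pi_matrix_of_isAlgClosed ℂ (MonoidAlgebra ℂ (G ⧸ N))
  refine ⟨m, d, fun i => Nat.pos_of_ne_zero (hd i).out, ?_, ?_⟩
  · have h := Φ.toLinearEquiv.finrank_eq
    rw [Module.finrank_pi_fintype] at h
    have h2 : Module.finrank ℂ (MonoidAlgebra ℂ (G ⧸ N)) = Nat.card (G ⧸ N) := by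
      rw [Nat.card_eq_fintype_card, (MonoidAlgebra.coeffLinearEquiv ℂ).finrank_eq]
      exact Module.finrank_finsupp_self ℂ
    rw [← h2, h]
    refine Finset.sum_congr rfl fun i _ => ?_
    simp [Module.finrank_matrix, sq]
  · intro n
    let φ : (i : Fin m) → d i = n → (MonoidAlgebra ℂ (G ⧸ N) →ₐ[ℂ] Matrix (Fin n) (Fin n) ℂ) :=
      fun i h => ((Matrix.reindexAlgEquiv ℂ ℂ (finCongr h)).toAlgHom.comp
        (Pi.evalAlgHom ℂ _ i)).comp Φ.toAlgHom
    have hφ : ∀ i h a, φ i h a = Matrix.reindex (finCongr h) (finCongr h) (Φ a i) :=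
      fun i h a => rfl
    have hker : ∀ i h, N ≤ (repOfAlgHom (QuotientGroup.mk' N) (φ i h)).ker := by
      intro i h g hg
      rw [MonoidHom.mem_ker]
      ext1
      rw [repOfAlgHom_coe]
      have : QuotientGroup.mk' N g = 1 := by simpa using hg
      rw [this, map_one, map_one]; rfl
    have hirr : ∀ i h, RepIsIrreducible (repOfAlgHom (QuotientGroup.mk' N) (φ i h)) := by
      intro i h
      subst h
      constructor
      · have := hd i
        exact bot_ne_top
      · intro W hW
        refine eq_bot_or_top_of_matrix_stable W fun A v hv => ?_
        have := algHom_stable (φ i rfl) W (by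
          intro g v hv
          obtain ⟨g, rfl⟩ := QuotientGroup.mk'_surjective N g
          exact hW g v hv) (Φ.symm (Pi.single i A)) v hv
        rw [hφ, Φ.apply_symm_apply] at this
        simpa using this
    let F : {i // d i = n} → Quot fun ρ₁ ρ₂ : {ρ : G →* GL (Fin n) ℂ //
        N ≤ ρ.ker ∧ RepIsIrreducible ρ} => RepIso ρ₁.1 ρ₂.1 := fun i =>
      Quot.mk _ ⟨repOfAlgHom (QuotientGroup.mk' N) (φ i.1 i.2), hker _ _, hirr _ _⟩
    have hF : Function.Bijective F := by
      constructor
      · rintro ⟨i, hi⟩ ⟨j, hj⟩ hij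
        have h1 := Quot.eqvGen_exact hij
        rw [Equivalence.eqvGen_iff (repIso_equivalence.comap _)] at h1
        obtain ⟨T, hT⟩ := h1
        by_contra hne
        have hne : i ≠ j := fun h => hne (by subst h; rfl)
        have key : ∀ a, (T : Matrix (Fin n) (Fin n) ℂ) * φ i hi a = φ j hj a * T := by
          intro a
          induction a using MonoidAlgebra.induction_on with
          | of g =>
            obtain ⟨g, rfl⟩ := QuotientGroup.mk'_surjective N g
            have := hT g
            rw [mul_inv_eq_iff_eq_mul] at this
            have := congrArg Units.val this
            exact this
          | add a b ha hb => rw [map_add, map_add, mul_add, add_mul, ha, hb]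
          | smul c a ha => rw [map_smul, map_smul, mul_smul_comm, smul_mul_assoc, ha]
        have k1 := key (Φ.symm (Pi.single i 1))
        rw [hφ, hφ, Φ.apply_symm_apply, Pi.single_eq_same, Pi.single_eq_of_ne hne.symm] at k1
        have k2 : (T : Matrix (Fin n) (Fin n) ℂ) = 0 := by simpa using k1
        have : Nonempty (Fin n) := ⟨⟨0, by have := (hd i).out; omega⟩⟩
        exact T.ne_zero k2
      · intro x
        obtain ⟨⟨ρ, hρN, hρ⟩, rfl⟩ := Quot.exists_rep x
        let ψ : MonoidAlgebra ℂ (G ⧸ N) →ₐ[ℂ] Matrix (Fin n) (Fin n) ℂ :=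
          MonoidAlgebra.lift ℂ _ _ ((Units.coeHom _).comp (QuotientGroup.lift N ρ hρN))
        have hψ : ∀ g : G, ψ (MonoidAlgebra.of ℂ _ (QuotientGroup.mk' N g)) = ρ g := by
          intro g
          simp [ψ]
        obtain ⟨i, L, hL⟩ := exists_intertwiner Φ ψ hρ.1 (by
          intro W hW
          refine hρ.2 W ?_
          intro g v hv
          rw [← hψ]
          exact hW _ v hv)
        have hdim : d i = n := by
          have := L.finrank_eq
          simpa using this
        refine ⟨⟨i, hdim⟩, ?_⟩
        apply Quot.sound
        subst hdim
        let T : GL (Fin (d i)) ℂ := ⟨LinearMap.toMatrix' L.toLinearMap,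
          LinearMap.toMatrix' L.symm.toLinearMap, by
            rw [← LinearMap.toMatrix'_comp]; simp, by
            rw [← LinearMap.toMatrix'_comp]; simp⟩
        refine ⟨T, fun g => ?_⟩
        rw [mul_inv_eq_iff_eq_mul]
        ext1
        rw [Units.val_mul, Units.val_mul, ← hψ]
        apply Matrix.toLin'.injective
        apply LinearMap.ext
        intro x
        rw [Matrix.toLin'_mul, Matrix.toLin'_mul, LinearMap.comp_apply, LinearMap.comp_apply]
        have e1 : Matrix.toLin' (T : Matrix _ _ ℂ) = L.toLinearMap :=
          Matrix.toLin'_toMatrix' _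
        rw [e1, Matrix.toLin'_apply, Matrix.toLin'_apply, repOfAlgHom_coe, hφ]
        have := hL (MonoidAlgebra.of ℂ _ (QuotientGroup.mk' N g)) x
        simpa using this
    rw [← Nat.card_eq_of_bijective F hF, Nat.card_eq_fintype_card, Fintype.card_subtype]

end Wedderburn


section Clifford

theorem dvd_sum_orbits {H X : Type*} [Group H] [MulAction H X] (s : Finset X) (m : X → ℕ)
    (hs : ∀ h : H, ∀ x ∈ s, h • x ∈ s) (hm : ∀ h : H, ∀ x ∈ s, m (h • x) = m x) (q : ℕ)
    (hq : ∀ x ∈ s, q ∣ Nat.card (MulAction.orbit H x)) : q ∣ ∑ x ∈ s, m x := by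
  classical
  rw [← Finset.sum_fiberwise_of_maps_to (s := s)
    (t := s.image (fun x => MulAction.orbit H x)) (g := fun x => MulAction.orbit H x)
    (fun x hx => Finset.mem_image_of_mem _ hx)]
  refine Finset.dvd_sum fun o ho => ?_
  obtain ⟨x, hx, rfl⟩ := Finset.mem_image.1 ho
  have h1 : ∀ y ∈ s.filter (fun y => MulAction.orbit H y = MulAction.orbit H x), m y = m x := by
    intro y hy
    obtain ⟨hy, hyx⟩ := Finset.mem_filter.1 hy
    obtain ⟨h, rfl⟩ := MulAction.orbit_eq_iff.1 hyx
    exact hm h x hx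
  rw [Finset.sum_congr rfl h1, Finset.sum_const, smul_eq_mul]
  apply Dvd.dvd.mul_right
  have h2 : MulAction.orbit H x =
      (s.filter (fun y => MulAction.orbit H y = MulAction.orbit H x) : Set X) := by
    ext y
    simp only [Finset.coe_filter, Set.mem_ofPred_eq, MulAction.orbit_eq_iff]
    constructor
    · intro hy
      refine ⟨?_, hy⟩
      obtain ⟨h, rfl⟩ := hy
      exact hs h x hx
    · exact fun hy => hy.2
  have h3 := hq x hx
  have h4 : Nat.card (MulAction.orbit H x) =
      (s.filter (fun y => MulAction.orbit H y = MulAction.orbit H x)).card := by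
    rw [Nat.card_coe_set_eq]
    conv_lhs => rw [h2]
    rw [Set.ncard_coe_finset]
  rwa [h4] at h3

theorem pow_dvd_card_orbit {p : ℕ} [Fact p.Prime] {H X : Type*} [Group H] [MulAction H X]
    (hH : IsPGroup p H) (x : X) [Finite (MulAction.orbit H x)] (f : ℕ)
    (g : H) (hg : g ^ p ^ f • x ≠ x) : p ^ (f + 1) ∣ Nat.card (MulAction.orbit H x) := by
  obtain ⟨i, hi⟩ := hH.card_orbit x
  rw [hi]
  apply pow_dvd_pow
  have hp := (Fact.out : p.Prime)
  obtain ⟨e, he⟩ := hH g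
  obtain ⟨j, -, hj⟩ := (Nat.dvd_prime_pow hp).1 ((MulAction.period_dvd_orderOf g x).trans
    (orderOf_dvd_of_pow_eq_one he))
  have hjf : f + 1 ≤ j := by
    by_contra hlt
    apply hg
    rw [MulAction.pow_smul_eq_iff_period_dvd, hj]
    exact pow_dvd_pow _ (by omega)
  have hle : p ^ j ≤ p ^ i := by
    rw [← hi, ← hj]
    have hinj : Function.Injective (fun k : Fin (MulAction.period g x) =>
        (⟨g ^ (k : ℕ) • x, MulAction.mem_orbit _ _⟩ : MulAction.orbit H x)) := by
      intro a b hab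
      have hab : g ^ (a : ℕ) • x = g ^ (b : ℕ) • x := congrArg Subtype.val hab
      have := Function.iterate_injOn_Iio_minimalPeriod (f := (g • ·)) (x := x)
        (x₁ := (a : ℕ)) (x₂ := (b : ℕ)) a.2 b.2 (by simpa [smul_iterate] using hab)
      exact Fin.ext this
    have := Nat.card_le_card_of_injective _ hinj
    simpa using this
  exact hjf.trans ((Nat.pow_le_pow_iff_right hp.one_lt).1 hle)

theorem pow_dvd_dim {p : ℕ} [Fact p.Prime] {n : ℕ} (H A : Subgroup (GL (Fin n) ℂ))
    (hH : IsPGroup p H) (hAH : A ≤ H) (hnorm : ∀ h ∈ H, ∀ a ∈ A, h * a * h⁻¹ ∈ A)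
    (hcomm : ∀ a ∈ A, ∀ b ∈ A, a * b = b * a) (f : ℕ)
    (hyp : ∀ v : Fin n → ℂ, v ≠ 0 →
      (∀ a ∈ A, ∃ c : ℂ, (a : Matrix (Fin n) (Fin n) ℂ).mulVec v = c • v) →
      ∃ g ∈ H, ∃ x ∈ A, ((g ^ p ^ f * x * (g ^ p ^ f)⁻¹ * x⁻¹ : GL (Fin n) ℂ) :
        Matrix (Fin n) (Fin n) ℂ).mulVec v ≠ v) :
    p ^ (f + 1) ∣ n := by
  classical
  have hp := (Fact.out : p.Prime)
  let T : A → Module.End ℂ (Fin n → ℂ) := fun a => Matrix.toLin' (a : GL (Fin n) ℂ)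
  have hTcomm : ∀ a b, Commute (T a) (T b) := by
    intro a b
    change T a * T b = T b * T a
    have := congrArg (fun x : GL (Fin n) ℂ => Matrix.toLin' (x : Matrix (Fin n) (Fin n) ℂ))
      (hcomm a a.2 b b.2)
    simpa [T, Matrix.toLin'_mul, Module.End.mul_eq_comp] using this
  have hss : ∀ a, (T a).IsSemisimple := by
    intro a
    obtain ⟨e, he⟩ := hH ⟨a, hAH a.2⟩
    have he' : (a : GL (Fin n) ℂ) ^ p ^ e = 1 := congrArg Subtype.val he
    have hsq : Squarefree (Polynomial.X ^ (p ^ e) - 1 : Polynomial ℂ) :=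
      (Polynomial.X_pow_sub_one_separable_iff.2
        (by exact_mod_cast (pow_pos hp.pos e).ne')).squarefree
    refine Module.End.isSemisimple_of_squarefree_aeval_eq_zero hsq ?_
    have : T a ^ p ^ e = 1 := by
      rw [← Matrix.toLin'_pow]
      rw [← Units.val_pow_eq_pow_val, he']
      simp; rfl
    simp [this]
  let W : (A → ℂ) → Submodule ℂ (Fin n → ℂ) := fun χ => ⨅ a, (T a).eigenspace (χ a)
  have hW : W = fun χ => ⨅ a, (T a).maxGenEigenspace (χ a) := by
    funext χ
    simp only [W]
    congr 1
    funext a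
    rw [(hss a).isFinitelySemisimple.maxGenEigenspace_eq_eigenspace]
  have hmem : ∀ χ v, v ∈ W χ ↔ ∀ a : A, ((a : GL (Fin n) ℂ) : Matrix (Fin n) (Fin n) ℂ).mulVec v = χ a • v := by
    intro χ v
    simp [W, Submodule.mem_iInf, T]
  have hind : iSupIndep W := by
    rw [hW]
    exact Module.End.independent_iInf_maxGenEigenspace_of_forall_mapsTo T
      (fun i j φ => Module.End.mapsTo_maxGenEigenspace_of_comm (hTcomm j i) φ)
  have htop : iSup W = ⊤ := by
    rw [hW]
    exact Module.End.iSup_iInf_maxGenEigenspace_eq_top_of_iSup_maxGenEigenspace_eq_top_of_commute T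
      (fun i j _ => hTcomm i j) (fun i => Module.End.iSup_maxGenEigenspace_eq_top _)
  have hint := DirectSum.isInternal_submodule_of_iSupIndep_of_iSup_eq_top hind htop
  have hint' := DirectSum.isInternal_ne_bot_iff.2 hint
  have hfin : {χ | W χ ≠ ⊥}.Finite := WellFoundedGT.finite_ne_bot_of_iSupIndep hind
  let s := hfin.toFinset
  have hsmem : ∀ χ, χ ∈ s ↔ W χ ≠ ⊥ := by intro χ; simp [s]
  have hdim : n = ∑ χ ∈ s, Module.finrank ℂ (W χ) := by
    let b := hint'.collectedBasis (fun χ => Module.finBasis ℂ (W χ.1))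
    have : Fintype {χ // W χ ≠ ⊥} := hfin.fintype
    have h1 := Module.finrank_eq_card_basis b
    rw [Module.finrank_fin_fun, Fintype.card_sigma] at h1
    simp only [Fintype.card_fin] at h1
    exact h1.trans (Finset.sum_subtype s hsmem (fun χ => Module.finrank ℂ (W χ))).symm
  -- the action on weights
  let act : MulAction H (A → ℂ) :=
    { smul := fun h χ a => χ ⟨(h : GL (Fin n) ℂ)⁻¹ * a * h, by
        have := hnorm (h : GL (Fin n) ℂ)⁻¹ (H.inv_mem h.2) a a.2
        rwa [inv_inv] at this⟩
      one_smul := by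
        intro χ
        funext a
        change χ _ = χ _
        congr 1
        ext1
        simp
      mul_smul := by
        intro g h χ
        funext a
        change χ _ = χ _
        congr 1
        ext1
        simp [mul_assoc] }
  have hsmul : ∀ (h : H) (χ : A → ℂ) (a : A) (b : A),
      (b : GL (Fin n) ℂ) = (h : GL (Fin n) ℂ)⁻¹ * a * h → (h • χ) a = χ b := by
    intro h χ a b hb
    change χ _ = χ _
    congr 1
    exact Subtype.ext hb.symm
  have hmap : ∀ (h : H) (χ : A → ℂ) (v : Fin n → ℂ), v ∈ W χ →
      ((h : GL (Fin n) ℂ) : Matrix (Fin n) (Fin n) ℂ).mulVec v ∈ W (h • χ) := by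
    intro h χ v hv
    rw [hmem] at hv ⊢
    intro a
    have hb : (h : GL (Fin n) ℂ)⁻¹ * a * h ∈ A := by
      have := hnorm (h : GL (Fin n) ℂ)⁻¹ (H.inv_mem h.2) a a.2
      rwa [inv_inv] at this
    rw [hsmul h χ a ⟨_, hb⟩ rfl]
    rw [← Matrix.mulVec_smul, ← hv ⟨_, hb⟩, Matrix.mulVec_mulVec, Matrix.mulVec_mulVec]
    congr 1
    rw [← Units.val_mul, ← Units.val_mul]
    congr 1
    simp [mul_assoc]
  have hle : ∀ (h : H) (χ : A → ℂ), Module.finrank ℂ (W χ) ≤ Module.finrank ℂ (W (h • χ)) := by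
    intro h χ
    have hinj : Function.Injective (Matrix.toLin' ((h : GL (Fin n) ℂ) :
        Matrix (Fin n) (Fin n) ℂ)) := by
      intro v w hvw
      have := congrArg (((h : GL (Fin n) ℂ)⁻¹ : GL (Fin n) ℂ) :
        Matrix (Fin n) (Fin n) ℂ).mulVec hvw
      simpa only [Matrix.toLin'_apply, Matrix.mulVec_mulVec, ← Units.val_mul, inv_mul_cancel,
        Units.val_one, Matrix.one_mulVec] using this
    refine LinearMap.finrank_le_finrank_of_injective (f := (Matrix.toLin' ((h : GL (Fin n) ℂ) :
        Matrix (Fin n) (Fin n) ℂ)).restrict (p := W χ) (q := W (h • χ)) (hmap h χ)) ?_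
    intro v w hvw
    exact Subtype.ext (hinj (congrArg Subtype.val hvw))
  have heq : ∀ (h : H) (χ : A → ℂ), Module.finrank ℂ (W (h • χ)) = Module.finrank ℂ (W χ) := by
    intro h χ
    refine le_antisymm ?_ (hle h χ)
    have := hle h⁻¹ (h • χ)
    rwa [inv_smul_smul] at this
  have hs : ∀ h : H, ∀ χ ∈ s, h • χ ∈ s := by
    intro h χ hχ
    rw [hsmem] at hχ ⊢
    rw [← Submodule.one_le_finrank_iff] at hχ ⊢
    rwa [heq]
  refine hdim.symm ▸ (?_ : p ^ (f + 1) ∣ ∑ χ ∈ s, Module.finrank ℂ (W χ))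
  refine dvd_sum_orbits (H := H) s _ hs (fun h χ _ => heq h χ) _ ?_
  intro χ hχ
  have : Finite (MulAction.orbit H χ) := by
    refine Set.Finite.subset s.finite_toSet ?_
    rintro _ ⟨h, rfl⟩
    exact hs h χ hχ
  obtain ⟨v, hv, hv0⟩ := (Submodule.ne_bot_iff _).1 ((hsmem χ).1 hχ)
  rw [hmem] at hv
  obtain ⟨g, hg, x, hx, hgx⟩ := hyp v hv0 (fun a ha => ⟨_, hv ⟨a, ha⟩⟩)
  refine pow_dvd_card_orbit hH χ f ⟨g, hg⟩ ?_
  intro hfix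
  apply hgx
  have hy : g ^ p ^ f * x * (g ^ p ^ f)⁻¹ ∈ A := hnorm _ (H.pow_mem hg _) _ hx
  have e1 := hsmul (⟨g, hg⟩ ^ p ^ f) χ ⟨_, hy⟩ ⟨x, hx⟩ (by simp [mul_assoc])
  rw [hfix] at e1
  have e2 := hv ⟨x, hx⟩
  have e3 := hv ⟨_, hy⟩
  rw [e1, ← e2] at e3
  have e4 : (x⁻¹ : GL (Fin n) ℂ) * (g ^ p ^ f * x * (g ^ p ^ f)⁻¹) =
      g ^ p ^ f * x * (g ^ p ^ f)⁻¹ * x⁻¹ := hcomm _ (A.inv_mem hx) _ hy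
  rw [← e4, Units.val_mul, ← Matrix.mulVec_mulVec]
  simp only at e3
  rw [e3, Matrix.mulVec_mulVec, ← Units.val_mul, inv_mul_cancel, Units.val_one, Matrix.one_mulVec]

end Clifford


section Congruence

/-- Reduction modulo `p ^ k`. -/
noncomputable def redSL (p : ℕ) [Fact p.Prime] (k : ℕ) :
    Matrix.SpecialLinearGroup (Fin 2) ℤ_[p] →* Matrix.SpecialLinearGroup (Fin 2) (ZMod (p ^ k)) :=
  Matrix.SpecialLinearGroup.map (PadicInt.toZModPow k)

/-- The principal congruence subgroup of level `p ^ k`. -/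
noncomputable def congSub (p : ℕ) [Fact p.Prime] (k : ℕ) :
    Subgroup (Matrix.SpecialLinearGroup (Fin 2) ℤ_[p]) := (redSL p k).ker

variable {p : ℕ} [Fact p.Prime]

instance congSub_normal (k : ℕ) : (congSub p k).Normal := by
  unfold congSub; infer_instance

theorem toZModPow_eq_zero_iff (k : ℕ) (x : ℤ_[p]) :
    PadicInt.toZModPow k x = 0 ↔ (p : ℤ_[p]) ^ k ∣ x := by
  rw [← RingHom.mem_ker, PadicInt.ker_toZModPow, Ideal.mem_span_singleton]

theorem redSL_apply (k : ℕ) (g : Matrix.SpecialLinearGroup (Fin 2) ℤ_[p]) (i j : Fin 2) :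
    redSL p k g i j = PadicInt.toZModPow k (g i j) := rfl

theorem redSL_eq_iff (k : ℕ) (g h : Matrix.SpecialLinearGroup (Fin 2) ℤ_[p]) :
    redSL p k g = redSL p k h ↔ ∀ i j, (p : ℤ_[p]) ^ k ∣ g i j - h i j := by
  rw [Matrix.SpecialLinearGroup.ext_iff]
  refine forall_congr' fun i => forall_congr' fun j => ?_
  rw [redSL_apply, redSL_apply, ← toZModPow_eq_zero_iff, map_sub, sub_eq_zero]

theorem mem_congSub_dvd (k : ℕ) (g : Matrix.SpecialLinearGroup (Fin 2) ℤ_[p]) :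
    g ∈ congSub p k ↔ ∀ i j, (p : ℤ_[p]) ^ k ∣ g i j - (1 : Matrix (Fin 2) (Fin 2) ℤ_[p]) i j := by
  rw [congSub, MonoidHom.mem_ker, ← map_one (redSL p k), redSL_eq_iff]
  rfl

theorem mem_congSub_iff (k : ℕ) (g : Matrix.SpecialLinearGroup (Fin 2) ℤ_[p]) :
    g ∈ congSub p k ↔ ∃ X : Matrix (Fin 2) (Fin 2) ℤ_[p],
      (g : Matrix (Fin 2) (Fin 2) ℤ_[p]) = 1 + (p : ℤ_[p]) ^ k • X := by
  rw [mem_congSub_dvd]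
  constructor
  · intro h
    choose X hX using h
    refine ⟨Matrix.of X, ?_⟩
    ext i j
    have := hX i j
    rw [Matrix.add_apply, Matrix.smul_apply, Matrix.of_apply, smul_eq_mul, ← this]
    ring
  · rintro ⟨X, hX⟩ i j
    refine ⟨X i j, ?_⟩
    rw [hX, Matrix.add_apply, Matrix.smul_apply, smul_eq_mul]
    ring

theorem congSub_antitone {j k : ℕ} (h : j ≤ k) : congSub p k ≤ congSub p j := by
  intro g hg
  rw [mem_congSub_dvd] at hg ⊢
  exact fun a b => (pow_dvd_pow _ h).trans (hg a b)

theorem mem_of_redSL_eq {k : ℕ} {S : Subgroup (Matrix.SpecialLinearGroup (Fin 2) ℤ_[p])}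
    (hS : congSub p k ≤ S) {g h : Matrix.SpecialLinearGroup (Fin 2) ℤ_[p]}
    (hgh : redSL p k g = redSL p k h) (hg : g ∈ S) : h ∈ S := by
  have : g⁻¹ * h ∈ S := hS (by
    rw [congSub, MonoidHom.mem_ker, map_mul, map_inv, hgh, inv_mul_cancel])
  simpa using S.mul_mem hg this

theorem congSub_comm {a k : ℕ} (h : k ≤ 2 * a) {x y : Matrix.SpecialLinearGroup (Fin 2) ℤ_[p]}
    (hx : x ∈ congSub p a) (hy : y ∈ congSub p a) : redSL p k (x * y) = redSL p k (y * x) := by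
  rw [redSL_eq_iff]
  obtain ⟨X, hX⟩ := (mem_congSub_iff _ _).1 hx
  obtain ⟨Y, hY⟩ := (mem_congSub_iff _ _).1 hy
  intro i j
  have : ((x * y : Matrix.SpecialLinearGroup (Fin 2) ℤ_[p]) : Matrix (Fin 2) (Fin 2) ℤ_[p])
      - ((y * x : Matrix.SpecialLinearGroup (Fin 2) ℤ_[p]) : Matrix (Fin 2) (Fin 2) ℤ_[p])
      = (p : ℤ_[p]) ^ (2 * a) • (X * Y - Y * X) := by
    rw [Matrix.SpecialLinearGroup.coe_mul, Matrix.SpecialLinearGroup.coe_mul, hX, hY]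
    simp only [mul_add, add_mul, mul_one, one_mul, smul_mul_smul_comm, ← pow_add, smul_sub]
    rw [two_mul]
    abel
  have := congrFun (congrFun this i) j
  rw [Matrix.sub_apply, Matrix.smul_apply, smul_eq_mul] at this
  rw [this]
  exact (pow_dvd_pow _ h).mul_right _

theorem congSub_pow_p {j : ℕ} (hj : 1 ≤ j) {x : Matrix.SpecialLinearGroup (Fin 2) ℤ_[p]}
    (hx : x ∈ congSub p j) : x ^ p ∈ congSub p (j + 1) := by
  obtain ⟨X, hX⟩ := (mem_congSub_iff _ _).1 hx
  have h1 : ∀ i : ℕ, ∃ Y : Matrix (Fin 2) (Fin 2) ℤ_[p],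
      (x : Matrix (Fin 2) (Fin 2) ℤ_[p]) ^ i = 1 + (p : ℤ_[p]) ^ j • Y := by
    intro i
    have := (mem_congSub_iff _ _).1 ((congSub p j).pow_mem hx i)
    rwa [Matrix.SpecialLinearGroup.coe_pow] at this
  choose Y hY using h1
  rw [mem_congSub_iff]
  obtain ⟨l, rfl⟩ : ∃ l, j = l + 1 := ⟨j - 1, by omega⟩
  refine ⟨X * (1 + (p : ℤ_[p]) ^ l • ∑ i ∈ Finset.range p, Y i), ?_⟩
  have h2 := mul_geom_sum (x : Matrix (Fin 2) (Fin 2) ℤ_[p]) p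
  have h3 : ∑ i ∈ Finset.range p, (x : Matrix (Fin 2) (Fin 2) ℤ_[p]) ^ i =
      (p : ℤ_[p]) • (1 + (p : ℤ_[p]) ^ l • ∑ i ∈ Finset.range p, Y i) := by
    rw [Finset.sum_congr rfl fun i _ => hY i, Finset.sum_add_distrib, ← Finset.smul_sum,
      smul_add, smul_smul, ← pow_succ']
    congr 1
    rw [Finset.sum_const, Finset.card_range, Nat.cast_smul_eq_nsmul]
  have h4 : (x : Matrix (Fin 2) (Fin 2) ℤ_[p]) ^ p =
      1 + ((x : Matrix (Fin 2) (Fin 2) ℤ_[p]) - 1) *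
        ∑ i ∈ Finset.range p, (x : Matrix (Fin 2) (Fin 2) ℤ_[p]) ^ i := by
    rw [h2]; abel
  rw [Matrix.SpecialLinearGroup.coe_pow, h4, h3, hX, add_sub_cancel_left, smul_mul_smul_comm,
    ← pow_succ]

theorem congSub_pow {x : Matrix.SpecialLinearGroup (Fin 2) ℤ_[p]}
    (hx : x ∈ congSub p 1) (k : ℕ) : x ^ p ^ k ∈ congSub p (k + 1) := by
  induction k with
  | zero => simpa using hx
  | succ k ih =>
    rw [pow_succ, pow_mul]
    exact congSub_pow_p (by omega) ih

/-- Upper unipotent. -/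
def uu {R : Type*} [CommRing R] (t : R) : Matrix.SpecialLinearGroup (Fin 2) R :=
  ⟨!![1, t; 0, 1], by simp⟩

/-- Lower unipotent. -/
def ll {R : Type*} [CommRing R] (t : R) : Matrix.SpecialLinearGroup (Fin 2) R :=
  ⟨!![1, 0; t, 1], by simp⟩

/-- A unipotent with nonzero diagonal part. -/
def yy {R : Type*} [CommRing R] (c : R) : Matrix.SpecialLinearGroup (Fin 2) R :=
  ⟨!![1 + c, -c; c, 1 - c], by rw [Matrix.det_fin_two_of]; ring⟩

theorem uu_coe {R : Type*} [CommRing R] (t : R) :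
    (uu t : Matrix (Fin 2) (Fin 2) R) = !![1, t; 0, 1] := rfl

theorem ll_coe {R : Type*} [CommRing R] (t : R) :
    (ll t : Matrix (Fin 2) (Fin 2) R) = !![1, 0; t, 1] := rfl

theorem yy_coe {R : Type*} [CommRing R] (c : R) :
    (yy c : Matrix (Fin 2) (Fin 2) R) = !![1 + c, -c; c, 1 - c] := rfl

theorem uu_mul {R : Type*} [CommRing R] (s t : R) : uu s * uu t = uu (s + t) := by
  apply Subtype.ext
  rw [Matrix.SpecialLinearGroup.coe_mul]
  simp [uu, add_comm]

theorem ll_mul {R : Type*} [CommRing R] (s t : R) : ll s * ll t = ll (s + t) := by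
  apply Subtype.ext
  rw [Matrix.SpecialLinearGroup.coe_mul]
  simp [ll]

theorem uu_pow {R : Type*} [CommRing R] (t : R) (m : ℕ) : uu t ^ m = uu (m * t) := by
  induction m with
  | zero => rw [pow_zero]; apply Subtype.ext; simp [uu, Matrix.one_fin_two]
  | succ m ih => rw [pow_succ, ih, uu_mul]; push_cast; ring_nf

theorem ll_pow {R : Type*} [CommRing R] (t : R) (m : ℕ) : ll t ^ m = ll (m * t) := by
  induction m with
  | zero => rw [pow_zero]; apply Subtype.ext; simp [ll, Matrix.one_fin_two]
  | succ m ih => rw [pow_succ, ih, ll_mul]; push_cast; ring_nf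

theorem red_uu (k : ℕ) (t : ℤ_[p]) : redSL p k (uu t) = uu (PadicInt.toZModPow k t) := by
  ext i j
  rw [redSL_apply]
  fin_cases i <;> fin_cases j <;> simp [uu]

theorem red_ll (k : ℕ) (t : ℤ_[p]) : redSL p k (ll t) = ll (PadicInt.toZModPow k t) := by
  ext i j
  rw [redSL_apply]
  fin_cases i <;> fin_cases j <;> simp [ll]

theorem red_yy (k : ℕ) (t : ℤ_[p]) : redSL p k (yy t) = yy (PadicInt.toZModPow k t) := by
  ext i j
  rw [redSL_apply]
  fin_cases i <;> fin_cases j <;> simp [yy]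

theorem uu_mem {a : ℕ} {t : ℤ_[p]} (h : (p : ℤ_[p]) ^ a ∣ t) : uu t ∈ congSub p a := by
  rw [mem_congSub_dvd]
  intro i j
  fin_cases i <;> fin_cases j <;> simp [uu, h]

theorem ll_mem {a : ℕ} {t : ℤ_[p]} (h : (p : ℤ_[p]) ^ a ∣ t) : ll t ∈ congSub p a := by
  rw [mem_congSub_dvd]
  intro i j
  fin_cases i <;> fin_cases j <;> simp [ll, h]

theorem yy_mem {a : ℕ} {t : ℤ_[p]} (h : (p : ℤ_[p]) ^ a ∣ t) : yy t ∈ congSub p a := by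
  rw [mem_congSub_dvd]
  intro i j
  fin_cases i <;> fin_cases j <;> simp [yy, h]

theorem comm1 {R : Type*} [CommRing R] (t c : R) (h1 : t * t * c = 0) (h2 : t * c * c = 0) :
    ((uu t * ll c * (uu t)⁻¹ * (ll c)⁻¹ : Matrix.SpecialLinearGroup (Fin 2) R) :
      Matrix (Fin 2) (Fin 2) R) = !![1 + t * c, 0; 0, 1 - t * c] := by
  simp only [Matrix.SpecialLinearGroup.coe_mul, Matrix.SpecialLinearGroup.coe_inv, uu_coe, ll_coe,
    Matrix.adjugate_fin_two_of, Matrix.mul_fin_two]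
  ext i j
  fin_cases i <;> fin_cases j <;> simp <;> grind

theorem comm2 {R : Type*} [CommRing R] (t c : R) (h1 : t * t * c = 0) (h2 : t * c * c = 0) :
    ((uu t * yy c * (uu t)⁻¹ * (yy c)⁻¹ : Matrix.SpecialLinearGroup (Fin 2) R) :
      Matrix (Fin 2) (Fin 2) R) = !![1 + t * c, - 2 * (t * c); 0, 1 - t * c] := by
  simp only [Matrix.SpecialLinearGroup.coe_mul, Matrix.SpecialLinearGroup.coe_inv, uu_coe, yy_coe,
    Matrix.adjugate_fin_two_of, Matrix.mul_fin_two]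
  ext i j
  fin_cases i <;> fin_cases j <;> simp <;> grind

theorem comm3 {R : Type*} [CommRing R] (t c : R) (h1 : t * t * c = 0) (h2 : t * c * c = 0) :
    ((ll t * yy c * (ll t)⁻¹ * (yy c)⁻¹ : Matrix.SpecialLinearGroup (Fin 2) R) :
      Matrix (Fin 2) (Fin 2) R) = !![1 + t * c, 0; 2 * (t * c), 1 - t * c] := by
  simp only [Matrix.SpecialLinearGroup.coe_mul, Matrix.SpecialLinearGroup.coe_inv, ll_coe, yy_coe,
    Matrix.adjugate_fin_two_of, Matrix.mul_fin_two]
  ext i j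
  fin_cases i <;> fin_cases j <;> simp <;> grind

theorem exists_half (hp : Odd p) : ∃ i : ℤ_[p], 2 * i = 1 := by
  have h2 : IsUnit (2 : ℤ_[p]) := by
    have h := (PadicInt.isUnit_iff (p := p) (z := ((2 : ℕ) : ℤ_[p])))
    have h' : ‖((2 : ℕ) : ℤ_[p])‖ = 1 := by
      rw [PadicInt.norm_def, PadicInt.coe_natCast, Padic.norm_natCast_eq_one_iff]
      exact (Nat.coprime_two_right (n := p)).2 hp
    simpa using h.2 h'
  obtain ⟨u, hu⟩ := h2
  exact ⟨(u⁻¹ : ℤ_[p]ˣ), by rw [← hu]; simp⟩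

theorem prod_comm {R : Type*} [CommRing R] (t c x y z w h : R) (z3 : t * c * (t * c) = 0)
    (h2 : 2 * h = 1)
    (hdet : (1 + t * c * x) * (1 + t * c * w) - t * c * y * (t * c * z) = 1) :
    !![1 + t * (c * (x + h * y - h * z)), 0; 0, 1 - t * (c * (x + h * y - h * z))] *
    !![1 + t * (c * -(h * y)), -2 * (t * (c * -(h * y))); 0, 1 - t * (c * -(h * y))] *
    !![1 + t * (c * (h * z)), 0; 2 * (t * (c * (h * z))), 1 - t * (c * (h * z))] =
    !![1 + t * c * x, t * c * y; t * c * z, 1 + t * c * w] := by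
  rw [Matrix.mul_fin_two, Matrix.mul_fin_two]
  congr! 3 <;> grind

theorem gen_congSub (hp : Odd p) {a b k : ℕ} (ha : 1 ≤ a) (hb : 1 ≤ b) (hk : a + b + 1 = k)
    (S : Subgroup (Matrix.SpecialLinearGroup (Fin 2) ℤ_[p])) (hS : congSub p k ≤ S)
    (hu : ∀ x ∈ congSub p a, uu ((p : ℤ_[p]) ^ b) * x * (uu ((p : ℤ_[p]) ^ b))⁻¹ * x⁻¹ ∈ S)
    (hl : ∀ x ∈ congSub p a, ll ((p : ℤ_[p]) ^ b) * x * (ll ((p : ℤ_[p]) ^ b))⁻¹ * x⁻¹ ∈ S) :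
    congSub p (a + b) ≤ S := by
  intro g hg
  obtain ⟨i2, hi2⟩ := exists_half hp
  obtain ⟨X, hX⟩ := (mem_congSub_iff _ _).1 hg
  set φ := PadicInt.toZModPow (p := p) k with hφ
  have hpk : ∀ m, k ≤ m → φ (p : ℤ_[p]) ^ m = 0 := by
    intro m hm
    rw [← map_pow]
    exact (toZModPow_eq_zero_iff k _).2 (pow_dvd_pow _ hm)
  have hdiv : ∀ s : ℤ_[p], (p : ℤ_[p]) ^ a ∣ p ^ a * s := fun s => dvd_mul_right _ _
  set s1 := X 0 0 + i2 * X 0 1 - i2 * X 1 0 with hs1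
  set s2 := - (i2 * X 0 1) with hs2
  set s3 := i2 * X 1 0 with hs3
  have m1 := hu _ (ll_mem (hdiv s1))
  have m2 := hu _ (yy_mem (hdiv s2))
  have m3 := hl _ (yy_mem (hdiv s3))
  refine mem_of_redSL_eq hS ?_ (S.mul_mem (S.mul_mem m1 m2) m3)
  have z1 : ∀ s, φ (p ^ b) * φ (p ^ b) * φ (p ^ a * s) = 0 := by
    intro s
    have := hpk (b + b + a) (by omega)
    rw [map_mul, map_pow, map_pow]
    linear_combination (φ s) * this
  have z2 : ∀ s, φ (p ^ b) * φ (p ^ a * s) * φ (p ^ a * s) = 0 := by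
    intro s
    have := hpk (b + a + a) (by omega)
    rw [map_mul, map_pow, map_pow]
    linear_combination (φ s * φ s) * this
  have z3 : φ (p ^ b) * φ (p ^ a) * (φ (p ^ b) * φ (p ^ a)) = 0 := by
    have := hpk (b + a + (b + a)) (by omega)
    rw [map_pow, map_pow]
    linear_combination this
  have gX : ∀ i j, redSL p k g i j =
      φ ((1 : Matrix (Fin 2) (Fin 2) ℤ_[p]) i j) + φ (p ^ b) * φ (p ^ a) * φ (X i j) := by
    intro i j
    rw [redSL_apply, hX, Matrix.add_apply, Matrix.smul_apply, smul_eq_mul, map_add, map_mul,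
      pow_add, map_mul]
    ring
  have hdet : redSL p k g 0 0 * redSL p k g 1 1 - redSL p k g 0 1 * redSL p k g 1 0 = 1 := by
    rw [← Matrix.det_fin_two]
    exact (redSL p k g).2
  have h2 : 2 * φ i2 = 1 := by
    have := congrArg φ hi2
    rwa [map_mul, map_ofNat, map_one] at this
  apply Subtype.ext
  rw [map_mul, map_mul]
  simp only [map_mul (redSL p k), map_inv, red_uu, red_ll, red_yy, ← hφ]
  simp only [hs1, hs2, hs3]
  rw [Matrix.SpecialLinearGroup.coe_mul, Matrix.SpecialLinearGroup.coe_mul,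
    comm1 _ _ (z1 _) (z2 _), comm2 _ _ (z1 _) (z2 _), comm3 _ _ (z1 _) (z2 _)]
  simp only [map_mul φ, map_add φ, map_sub φ, map_neg φ]
  refine (prod_comm _ _ _ _ _ (φ (X 1 1)) _ z3 h2 ?_).trans ?_
  · simpa [gX] using hdet
  · rw [Matrix.eta_fin_two (redSL p k g : Matrix (Fin 2) (Fin 2) (ZMod (p ^ k)))]
    simp [gX]

end Congruence


section Cont

open scoped Matrix.Norms.Operator in
theorem no_small {n : ℕ} (g : GL (Fin n) ℂ)
    (h : ∀ m : ℕ, ‖((g ^ m : GL (Fin n) ℂ) : Matrix (Fin n) (Fin n) ℂ) - 1‖ ≤ 1 / 2) : g = 1 := by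
  have key : ∀ m : ℕ, ∀ j : ℕ,
      ‖((g ^ j : GL (Fin n) ℂ) : Matrix (Fin n) (Fin n) ℂ) - 1‖ ≤ (3 / 4 : ℝ) ^ m := by
    intro m
    induction m with
    | zero => intro j; exact (h j).trans (by norm_num)
    | succ m ih =>
      intro j
      set y := ((g ^ j : GL (Fin n) ℂ) : Matrix (Fin n) (Fin n) ℂ) - 1 with hy
      have e : (2 : ℂ) • y = (((g ^ (2 * j) : GL (Fin n) ℂ) : Matrix (Fin n) (Fin n) ℂ) - 1)
          - y * y := by
        rw [two_mul, pow_add, Units.val_mul, hy, two_smul]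
        noncomm_ring
      have h1 := congrArg norm e
      rw [norm_smul] at h1
      have h2 := norm_sub_le (((g ^ (2 * j) : GL (Fin n) ℂ) : Matrix (Fin n) (Fin n) ℂ) - 1)
        (y * y)
      have h3 := norm_mul_le y y
      have h4 := ih (2 * j)
      have h5 := ih j
      have h6 := h j
      rw [← hy] at h5 h6
      have h7 : ‖y‖ * ‖y‖ ≤ (3 / 4 : ℝ) ^ m * (1 / 2) :=
        mul_le_mul h5 h6 (norm_nonneg _) (by positivity)
      have h8 : ‖(2 : ℂ)‖ = 2 := by simp
      rw [h8] at h1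
      rw [pow_succ]
      linarith
  have h0 : ‖(g : Matrix (Fin n) (Fin n) ℂ) - 1‖ ≤ 0 := by
    refine ge_of_tendsto' (tendsto_pow_atTop_nhds_zero_of_lt_one (r := (3 / 4 : ℝ))
      (by norm_num) (by norm_num)) fun m => ?_
    simpa using key m 1
  have := norm_le_zero_iff.1 h0
  apply Units.ext
  rw [Units.val_one]
  exact sub_eq_zero.1 this

variable {p : ℕ} [Fact p.Prime]

theorem dvd_iff_norm (k : ℕ) (x : ℤ_[p]) : (p : ℤ_[p]) ^ k ∣ x ↔ ‖x‖ ≤ (p : ℝ) ^ (-(k : ℤ)) := by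
  rw [PadicInt.norm_le_pow_iff_mem_span_pow, Ideal.mem_span_singleton]

theorem coset_open (k : ℕ) (g : Matrix.SpecialLinearGroup (Fin 2) ℤ_[p]) :
    ∀ᶠ h in nhds g, redSL p k h = redSL p k g := by
  simp only [redSL_eq_iff, Filter.eventually_all]
  intro i j
  have hc : Continuous fun h : Matrix.SpecialLinearGroup (Fin 2) ℤ_[p] => h i j := by
    have : Continuous fun h : Matrix.SpecialLinearGroup (Fin 2) ℤ_[p] =>
      (h : Matrix (Fin 2) (Fin 2) ℤ_[p]) := continuous_subtype_val
    exact (continuous_apply j).comp ((continuous_apply i).comp this)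
  have hc2 : Continuous fun h : Matrix.SpecialLinearGroup (Fin 2) ℤ_[p] => ‖h i j - g i j‖ :=
    (hc.sub continuous_const).norm
  have hp0 : (0 : ℝ) < (p : ℝ) ^ (-(k : ℤ)) :=
    zpow_pos (by exact_mod_cast (Fact.out : p.Prime).pos) _
  have := (hc2.tendsto g).eventually_lt_const (u := (p : ℝ) ^ (-(k : ℤ))) (by simpa using hp0)
  filter_upwards [this] with h hh
  exact (dvd_iff_norm _ _).2 hh.le

theorem cont_of_le {n k : ℕ} (ρ : Matrix.SpecialLinearGroup (Fin 2) ℤ_[p] →* GL (Fin n) ℂ)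
    (h : congSub p k ≤ ρ.ker) : RepContinuous ρ := by
  rw [RepContinuous, continuous_iff_continuousAt]
  intro g
  refine (continuousAt_const (y := (ρ g : Matrix (Fin n) (Fin n) ℂ))).congr ?_
  filter_upwards [coset_open k g] with x hx
  have : g⁻¹ * x ∈ ρ.ker := h (by
    rw [congSub, MonoidHom.mem_ker, map_mul, map_inv, hx, inv_mul_cancel])
  rw [MonoidHom.mem_ker, map_mul, map_inv, inv_mul_eq_one] at this
  rw [this]

theorem congSub_nhds_basis (U : Set (Matrix.SpecialLinearGroup (Fin 2) ℤ_[p]))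
    (hU : U ∈ nhds 1) : ∃ k, (congSub p k : Set _) ⊆ U := by
  have hU' : U ∈ Filter.comap (Subtype.val : {A : Matrix (Fin 2) (Fin 2) ℤ_[p] // A.det = 1} → _)
      (nhds (1 : Matrix (Fin 2) (Fin 2) ℤ_[p])) :=
    (nhds_induced (Subtype.val : {A : Matrix (Fin 2) (Fin 2) ℤ_[p] // A.det = 1} → _)
      (1 : Matrix.SpecialLinearGroup (Fin 2) ℤ_[p])) ▸ hU
  obtain ⟨V, hV, hVU⟩ := hU'
  have hV' : V ∈ Filter.pi fun i => nhds ((1 : Matrix (Fin 2) (Fin 2) ℤ_[p]) i) := by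
    have e : nhds (fun i => (1 : Matrix (Fin 2) (Fin 2) ℤ_[p]) i) = _ := nhds_pi
    rw [← e]
    exact hV
  replace hV' := Filter.mem_pi'.1 hV'
  obtain ⟨I, t, ht, hsub⟩ := hV'
  have : ∀ i, ∃ ε > 0, ∀ r : Fin 2 → ℤ_[p], (∀ j, ‖r j - (1 : Matrix (Fin 2) (Fin 2) ℤ_[p]) i j‖ < ε) →
      r ∈ t i := by
    intro i
    obtain ⟨ε, hε, hb⟩ := Metric.mem_nhds_iff.1 (ht i)
    refine ⟨ε, hε, fun r hr => hb ?_⟩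
    rw [Metric.mem_ball, dist_pi_lt_iff hε]
    intro j
    rw [dist_eq_norm]
    exact hr j
  choose ε hε hr using this
  obtain ⟨k, hk⟩ : ∃ k : ℕ, (p : ℝ) ^ (-(k : ℤ)) < min (ε 0) (ε 1) := 
    PadicInt.exists_pow_neg_lt p (lt_min (hε 0) (hε 1))
  refine ⟨k, fun g hg => hVU ?_⟩
  refine hsub fun i _ => hr i _ fun j => ?_
  have := (dvd_iff_norm _ _).1 ((mem_congSub_dvd _ _).1 hg i j)
  refine this.trans_lt (hk.trans_le ?_)
  fin_cases i
  · exact min_le_left _ _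
  · exact min_le_right _ _

open scoped Matrix.Norms.Operator in
theorem exists_level {n : ℕ} (ρ : Matrix.SpecialLinearGroup (Fin 2) ℤ_[p] →* GL (Fin n) ℂ)
    (h : RepContinuous ρ) : ∃ k, congSub p k ≤ ρ.ker := by
  have hc : Continuous fun g => ‖(ρ g : Matrix (Fin n) (Fin n) ℂ) - 1‖ := by
    have h' : Continuous fun g => (ρ g : Matrix (Fin n) (Fin n) ℂ) := h
    exact (h'.sub continuous_const).norm
  have := (hc.tendsto 1).eventually_lt_const (u := (1 / 2 : ℝ)) (by simp)
  obtain ⟨k, hk⟩ := congSub_nhds_basis _ this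
  refine ⟨k, fun g hg => ?_⟩
  rw [MonoidHom.mem_ker]
  refine no_small _ fun m => ?_
  rw [← map_pow]
  exact le_of_lt (hk ((congSub p k).pow_mem hg m))

end Cont

section Level

variable {p : ℕ} [Fact p.Prime]

/-- The stabilizer of a vector. -/
def stabV {G : Type*} [Group G] {n : ℕ} (ρ : G →* GL (Fin n) ℂ) (v : Fin n → ℂ) : Subgroup G where
  carrier := {g | (ρ g : Matrix (Fin n) (Fin n) ℂ).mulVec v = v}
  one_mem' := by simp
  mul_mem' := by
    intro a b ha hb
    simp only [Set.mem_ofPred_eq] at *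
    rw [map_mul, Units.val_mul, ← Matrix.mulVec_mulVec, hb, ha]
  inv_mem' := by
    intro a ha
    simp only [Set.mem_ofPred_eq] at *
    conv_lhs => rw [← ha]
    rw [Matrix.mulVec_mulVec, ← Units.val_mul, ← map_mul, inv_mul_cancel, map_one]
    simp

theorem mem_stabV {G : Type*} [Group G] {n : ℕ} (ρ : G →* GL (Fin n) ℂ) (v : Fin n → ℂ) (g : G) :
    g ∈ stabV ρ v ↔ (ρ g : Matrix (Fin n) (Fin n) ℂ).mulVec v = v := Iff.rfl

/-- The fixed space of a subgroup. -/
def fixedV {G : Type*} [Group G] {n : ℕ} (ρ : G →* GL (Fin n) ℂ) (N : Subgroup G) :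
    Submodule ℂ (Fin n → ℂ) where
  carrier := {v | ∀ g ∈ N, (ρ g : Matrix (Fin n) (Fin n) ℂ).mulVec v = v}
  zero_mem' := by simp
  add_mem' := by
    intro a b ha hb g hg
    rw [Matrix.mulVec_add, ha g hg, hb g hg]
  smul_mem' := by
    intro c a ha g hg
    rw [Matrix.mulVec_smul, ha g hg]

theorem le_ker_of_fixed {G : Type*} [Group G] {n : ℕ} (ρ : G →* GL (Fin n) ℂ) (N : Subgroup G)
    [hN : N.Normal] (hρ : RepIsIrreducible ρ) (v : Fin n → ℂ) (hv : v ≠ 0)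
    (h : N ≤ stabV ρ v) : N ≤ ρ.ker := by
  have hinv : RepInvariant ρ (fixedV ρ N) := by
    intro g w hw x hx
    have h1 := hw _ (hN.conj_mem x hx g⁻¹)
    rw [inv_inv] at h1
    have h2 : x * g = g * (g⁻¹ * x * g) := by group
    rw [Matrix.mulVec_mulVec, ← Units.val_mul, ← map_mul, h2, map_mul, Units.val_mul,
      ← Matrix.mulVec_mulVec, h1]
  have hvm : v ∈ fixedV ρ N := fun g hg => h hg
  rcases hρ.2 _ hinv with h0 | h0
  · rw [h0, Submodule.mem_bot] at hvm
    exact absurd hvm hv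
  · intro g hg
    rw [MonoidHom.mem_ker]
    apply Units.ext
    rw [Units.val_one]
    apply Matrix.mulVec_injective
    funext w
    rw [Matrix.one_mulVec]
    have : w ∈ fixedV ρ N := by rw [h0]; trivial
    exact this g hg

theorem level_bound (hp : Odd p) {n f : ℕ}
    (ρ : Matrix.SpecialLinearGroup (Fin 2) ℤ_[p] →* GL (Fin n) ℂ)
    (hc : RepContinuous ρ) (hi : RepIsIrreducible ρ) (hn : ¬ p ^ (f + 1) ∣ n) :
    congSub p (2 * (f + 1) + 2) ≤ ρ.ker := by
  classical
  have hex := exists_level ρ hc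
  obtain ⟨k, hk, hmin⟩ : ∃ k, congSub p k ≤ ρ.ker ∧ ∀ j < k, ¬ congSub p j ≤ ρ.ker :=
    ⟨Nat.find hex, Nat.find_spec hex, fun j hj => Nat.find_min hex hj⟩
  by_cases hlt : k ≤ 2 * (f + 1) + 2
  · exact (congSub_antitone hlt).trans hk
  exfalso
  apply hn
  set a := k - 1 - (f + 1) with ha
  have hred : ∀ x y, redSL p k x = redSL p k y → ρ x = ρ y := by
    intro x y hxy
    have : x⁻¹ * y ∈ ρ.ker := hk (by
      rw [congSub, MonoidHom.mem_ker, map_mul, map_inv, hxy, inv_mul_cancel])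
    rwa [MonoidHom.mem_ker, map_mul, map_inv, inv_mul_eq_one] at this
  refine pow_dvd_dim ((congSub p 1).map ρ) ((congSub p a).map ρ) ?_
    (Subgroup.map_mono (congSub_antitone (by omega))) ?_ ?_ f ?_
  · rintro ⟨_, x, hx, rfl⟩
    refine ⟨k, Subtype.ext ?_⟩
    have := hk (congSub_antitone (Nat.le_succ k) (congSub_pow hx k))
    rw [MonoidHom.mem_ker, map_pow] at this
    exact this
  · rintro _ ⟨h, -, rfl⟩ _ ⟨x, hx, rfl⟩
    exact ⟨h * x * h⁻¹, (congSub_normal a).conj_mem x hx h, by simp⟩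
  · rintro _ ⟨x, hx, rfl⟩ _ ⟨y, hy, rfl⟩
    rw [← map_mul, ← map_mul]
    exact hred _ _ (congSub_comm (by omega) hx hy)
  · intro v hv _
    by_contra hcon
    push Not at hcon
    have hgen : congSub p (a + (f + 1)) ≤ stabV ρ v := by
      refine gen_congSub hp (a := a) (b := f + 1) (k := k) (by omega) (by omega) (by omega) _
        ?_ ?_ ?_
      · intro x hx
        have := hk hx
        rw [MonoidHom.mem_ker] at this
        rw [mem_stabV, this]
        simp
      · intro x hx
        have h1 := hcon _ ⟨uu (p : ℤ_[p]), uu_mem (by simp), rfl⟩ _ ⟨x, hx, rfl⟩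
        rw [← map_pow, uu_pow] at h1
        rw [mem_stabV]
        simpa [pow_succ] using h1
      · intro x hx
        have h1 := hcon _ ⟨ll (p : ℤ_[p]), ll_mem (by simp), rfl⟩ _ ⟨x, hx, rfl⟩
        rw [← map_pow, ll_pow] at h1
        rw [mem_stabV]
        simpa [pow_succ] using h1
    exact hmin _ (by omega) (le_ker_of_fixed ρ _ hi v hv hgen)

theorem finite_quot (k : ℕ) :
    Finite (Matrix.SpecialLinearGroup (Fin 2) ℤ_[p] ⧸ congSub p k) := by
  have : NeZero (p ^ k) := ⟨pow_ne_zero _ (Fact.out : p.Prime).ne_zero⟩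
  exact Finite.of_equiv _ (QuotientGroup.quotientKerEquivRange (redSL p k)).symm.toEquiv

theorem dvd_card_quot (k : ℕ) :
    p ^ k ∣ Nat.card (Matrix.SpecialLinearGroup (Fin 2) ℤ_[p] ⧸ congSub p k) := by
  set q : Matrix.SpecialLinearGroup (Fin 2) ℤ_[p] ⧸ congSub p k :=
    ((uu (1 : ℤ_[p]) : Matrix.SpecialLinearGroup (Fin 2) ℤ_[p]) : _ ⧸ congSub p k)
  have hm : ∀ m : ℕ, q ^ m = 1 ↔ p ^ k ∣ m := by
    intro m
    rw [← QuotientGroup.mk_pow, QuotientGroup.eq_one_iff, uu_pow, mul_one]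
    have h1 : (p : ℤ_[p]) ^ k ∣ (m : ℤ_[p]) ↔ p ^ k ∣ m := by
      rw [← toZModPow_eq_zero_iff, map_natCast, ZMod.natCast_eq_zero_iff]
    rw [← h1]
    refine ⟨fun h => ?_, uu_mem⟩
    have := (mem_congSub_dvd _ _).1 h 0 1
    simpa [uu] using this
  have h2 : p ^ k ∣ orderOf q := (hm _).1 (pow_orderOf_eq_one q)
  exact h2.trans (orderOf_dvd_natCard q)

theorem main_sum (hp : Odd p) (f : ℕ) : ∃ s₀ : Finset ℕ, ∀ s, s₀ ⊆ s →
    p ^ (f + 1) ∣ ∑ n ∈ s,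
      contIrrRepCount (Matrix.SpecialLinearGroup (Fin 2) ℤ_[p]) (n + 1) * (n + 1) ^ 2 := by
  have := finite_quot (p := p) (2 * (f + 1) + 2)
  obtain ⟨m, d, hd, hsum, hcount⟩ := count_reps (congSub p (2 * (f + 1) + 2))
  refine ⟨Finset.univ.image fun i => d i - 1, fun s hs => ?_⟩
  have key : ∀ n, contIrrRepCount (Matrix.SpecialLinearGroup (Fin 2) ℤ_[p]) n * n ^ 2 ≡
      (Finset.univ.filter fun i => d i = n).card * n ^ 2 [MOD p ^ (f + 1)] := by
    intro n
    by_cases hn : p ^ (f + 1) ∣ n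
    · have h2 : p ^ (f + 1) ∣ n ^ 2 := hn.trans (dvd_pow_self n two_ne_zero)
      exact ((Nat.modEq_zero_iff_dvd.2 (h2.mul_left _)).trans
        (Nat.modEq_zero_iff_dvd.2 (h2.mul_left _)).symm)
    · rw [← hcount n, contIrrRepCount]
      have : (fun ρ : Matrix.SpecialLinearGroup (Fin 2) ℤ_[p] →* GL (Fin n) ℂ =>
          RepContinuous ρ ∧ RepIsIrreducible ρ) =
          fun ρ => congSub p (2 * (f + 1) + 2) ≤ ρ.ker ∧ RepIsIrreducible ρ := by
        funext ρ
        exact propext ⟨fun h => ⟨level_bound hp ρ h.1 h.2 hn, h.2⟩,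
          fun h => ⟨cont_of_le ρ h.1, h.2⟩⟩
      rw [this]
  have h1 : ∑ n ∈ s, contIrrRepCount (Matrix.SpecialLinearGroup (Fin 2) ℤ_[p]) (n + 1) *
      (n + 1) ^ 2 ≡ ∑ n ∈ s, (Finset.univ.filter fun i => d i = n + 1).card * (n + 1) ^ 2
      [MOD p ^ (f + 1)] := by
    unfold Nat.ModEq
    rw [Finset.sum_nat_mod, Finset.sum_congr rfl (fun n _ => key (n + 1)), ← Finset.sum_nat_mod]
  have h2 : ∑ n ∈ s, (Finset.univ.filter fun i => d i = n + 1).card * (n + 1) ^ 2 =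
      ∑ i, d i ^ 2 := by
    have hmap : ∀ i ∈ (Finset.univ : Finset (Fin m)), d i - 1 ∈ s := fun i hi =>
      hs (Finset.mem_image_of_mem _ hi)
    rw [← Finset.sum_fiberwise_of_maps_to hmap]
    refine Finset.sum_congr rfl fun n _ => ?_
    have e : (Finset.univ.filter fun i => d i = n + 1) =
        Finset.univ.filter fun i => d i - 1 = n := by
      ext i
      have := hd i
      simp only [Finset.mem_filter, Finset.mem_univ, true_and]
      omega
    rw [← e, Finset.sum_congr rfl (g := fun _ => (n + 1) ^ 2)]
    · simp
    · intro i hi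
      rw [(Finset.mem_filter.1 hi).2]
  rw [h2, hsum] at h1
  exact (h1.dvd_iff dvd_rfl).2
    ((pow_dvd_pow _ (by omega)).trans (dvd_card_quot (2 * (f + 1) + 2)))

end Level

/-- **`p`-adic vanishing of the representation zeta function of `SL₂(ℤ_p)` at `s = -2`**
(González-Sánchez–Jaikin-Zapirain–Klopsch). For an odd prime `p`, the series
`∑_{n ≥ 1} rₙ(SL₂(ℤ_p)) n²`, with terms regarded as elements of `ℚ_p`, converges in `ℚ_p`
with sum `0`. -/
theorem representation_zeta_SL2_Zp_padic_vanishing (p : ℕ) [Fact p.Prime] (hp : Odd p) :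
    HasSum
      (fun n : ℕ =>
        ((contIrrRepCount (Matrix.SpecialLinearGroup (Fin 2) ℤ_[p]) (n + 1) * (n + 1) ^ 2 : ℕ) :
          ℚ_[p]))
      0 := by
  rw [HasSum, SummationFilter.unconditional_filter, Metric.tendsto_atTop]
  intro ε hε
  obtain ⟨f, hf⟩ := PadicInt.exists_pow_neg_lt p hε
  obtain ⟨s₀, hs₀⟩ := main_sum hp f
  refine ⟨s₀, fun s hs => ?_⟩
  rw [dist_zero_right, ← Nat.cast_sum]
  refine lt_of_le_of_lt ?_ hf
  have h : p ^ f ∣ _ := (pow_dvd_pow p (Nat.le_succ f)).trans (hs₀ s hs)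
  have := (Padic.norm_int_le_pow_iff_dvd (p := p) _ f).2 (Int.natCast_dvd_natCast.2 h)
  simpa using this
end
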